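/- arXiv:2601.20493 — 2 statements merged into one kernel-verified Lean document; each statement's English description precedes it below -/
import Mathlib

section
/- Let n ≥ 2 and f ∈ C^∞(B₁). Let u : B₁ → ℝ be continuous and nonnegative, and assume u is C² on the open set {u > 0} with Δu = −f there. Assume moreover that for every open set D compactly contained in B₁ there is a constant C_D < ∞ such that (1/r) ⨍_{∂B_r(x)} u dμH^{n−1} ≤ C_D for every ball B_r(x) ⊆ D with x ∈ ∂{u > 0}. Then u is locally Lipschitz in B₁: for every δ ∈ (0,1) there is a constant C_δ such that u restricted to B_{1−δ} is Lipschitz with constant C_δ. -/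
open MeasureTheory Metric Set Filter
open scoped ENNReal RealInnerProductSpace Topology NNReal

noncomputable section

variable {n : ℕ}

/-- The Laplacian of `u : ℝⁿ → ℝ`, written with iterated directional derivatives. -/
def lap (u : EuclideanSpace ℝ (Fin n) → ℝ) (x : EuclideanSpace ℝ (Fin n)) : ℝ :=
  ∑ i : Fin n, fderiv ℝ (fun y => fderiv ℝ u y (EuclideanSpace.single i 1)) x
    (EuclideanSpace.single i 1)

/-- The positivity set `{u > 0}` of `u`, within the open unit ball `B₁`. -/
def posSet (u : EuclideanSpace ℝ (Fin n) → ℝ) : Set (EuclideanSpace ℝ (Fin n)) :=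
  {x | x ∈ ball (0 : EuclideanSpace ℝ (Fin n)) 1 ∧ 0 < u x}

/-- `U` coincides, inside some small ball around `z`, with the open region above the graph of an
`L`-Lipschitz function `φ` (vanishing at the origin) in some rotated coordinate frame. -/
def IsLipGraphNear (U : Set (EuclideanSpace ℝ (Fin n))) (z : EuclideanSpace ℝ (Fin n)) : Prop :=
  ∃ (r L : ℝ)
    (e : WithLp 2 (EuclideanSpace ℝ (Fin (n-1)) × ℝ) ≃ₗᵢ[ℝ] EuclideanSpace ℝ (Fin n))
    (φ : EuclideanSpace ℝ (Fin (n-1)) → ℝ),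
    0 < r ∧ 0 < L ∧ LipschitzWith (Real.toNNReal L) φ ∧ φ 0 = 0 ∧
    U ∩ ball z r =
      {p | ∃ y t, φ y < t ∧
        p = z + e ((WithLp.equiv 2 (EuclideanSpace ℝ (Fin (n-1)) × ℝ)).symm (y, t))} ∩ ball z r

/-- A bounded Lipschitz domain of `ℝⁿ`. -/
def IsLipschitzDomain (Ω : Set (EuclideanSpace ℝ (Fin n))) : Prop :=
  Bornology.IsBounded Ω ∧ IsOpen Ω ∧ IsConnected Ω ∧ ∀ x ∈ frontier Ω, IsLipGraphNear Ω x

/-- Near `z`, the set `S` is the graph of a `C^∞` function `ψ` (vanishing at the origin) in some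
rotated coordinate frame: `S` is a smooth hypersurface near `z`. -/
def IsSmoothGraphNear (S : Set (EuclideanSpace ℝ (Fin n))) (z : EuclideanSpace ℝ (Fin n)) : Prop :=
  ∃ (ρ : ℝ)
    (e : WithLp 2 (EuclideanSpace ℝ (Fin (n-1)) × ℝ) ≃ₗᵢ[ℝ] EuclideanSpace ℝ (Fin n))
    (ψ : EuclideanSpace ℝ (Fin (n-1)) → ℝ),
    0 < ρ ∧ ContDiff ℝ (⊤ : ℕ∞) ψ ∧ ψ 0 = 0 ∧
    S ∩ ball z ρ =
      {p | ∃ y t, t = ψ y ∧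
        p = z + e ((WithLp.equiv 2 (EuclideanSpace ℝ (Fin (n-1)) × ℝ)).symm (y, t))} ∩ ball z ρ

/-- `g` is the weak gradient of `u` on the set `s`. -/
def HasWeakGradOn (u : EuclideanSpace ℝ (Fin n) → ℝ)
    (g : EuclideanSpace ℝ (Fin n) → EuclideanSpace ℝ (Fin n))
    (s : Set (EuclideanSpace ℝ (Fin n))) : Prop :=
  ∀ η : EuclideanSpace ℝ (Fin n) → ℝ, ContDiff ℝ (⊤ : ℕ∞) η → HasCompactSupport η → tsupport η ⊆ s →
    ∀ v : EuclideanSpace ℝ (Fin n),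
      ∫ x in s, u x * fderiv ℝ η x v = -∫ x in s, ⟪g x, v⟫ * η x

/-- `u` is a weak solution of the Alt–Caffarelli type problem
`Δu = -f` in `{u>0} ∩ B₁`, `∂_ν u = Q` on `∂{u>0} ∩ B₁` (Definition 2.1). -/
structure IsWeakSolution (f Q u : EuclideanSpace ℝ (Fin n) → ℝ) : Prop where
  contOn : ContinuousOn u (ball 0 1)
  nonneg : ∀ x ∈ ball (0 : EuclideanSpace ℝ (Fin n)) 1, 0 ≤ u x
  c2 : ContDiffOn ℝ 2 u (posSet u)
  eqn : ∀ x ∈ posSet u, lap u x = - f x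
  nondeg : ∀ D : Set (EuclideanSpace ℝ (Fin n)), IsOpen D →
    closure D ⊆ ball (0 : EuclideanSpace ℝ (Fin n)) 1 →
    ∃ c C : ℝ, 0 < c ∧ c ≤ C ∧ ∀ x r, 0 < r → ball x r ⊆ D → x ∈ frontier (posSet u) →
      c ≤ (1/r) * ⨍ y in sphere x r, u y ∂(μH[(n-1:ℝ)]) ∧
      (1/r) * ⨍ y in sphere x r, u y ∂(μH[(n-1:ℝ)]) ≤ C
  locLip : ∀ K : Set (EuclideanSpace ℝ (Fin n)), IsCompact K →
    K ⊆ ball (0 : EuclideanSpace ℝ (Fin n)) 1 → ∃ L : ℝ≥0, LipschitzOnWith L u K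
  weakEq : ∀ η : EuclideanSpace ℝ (Fin n) → ℝ, ContDiff ℝ (⊤ : ℕ∞) η → HasCompactSupport η →
    tsupport η ⊆ ball (0 : EuclideanSpace ℝ (Fin n)) 1 →
    -∫ x in ball (0 : EuclideanSpace ℝ (Fin n)) 1, ⟪gradient u x, gradient η x⟫
      = ∫ x in frontier (posSet u) ∩ ball (0 : EuclideanSpace ℝ (Fin n)) 1,
          Q x * η x ∂(μH[(n-1:ℝ)])
        - ∫ x in posSet u, f x * η x

/-!
The derivative in the scale `r` of the mean of `v` against `(1 - |y|²)₊` is `r / 4` times the mean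
of `Δv` against the square of that kernel. Since both kernels are Lipschitz, moving the centre
changes such means by a multiple of the distance moved, so `|v x - v x'| / |x - x'|` is controlled
by `sup |Δv|` and the scaled `L¹` norm of `v` on balls about `x` and `x'`.

At a point of `{u > 0}` at distance `R > 0` from the free boundary this applies on `B_R`: either
`R` is bounded below, or `u` has integral at most `C R ^ (n + 1)` there, because the ball lies in
one of radius `2R` about a free boundary point, over which the spherical averages are integrated. In
this integration Hausdorff measure dominates a multiple of the surface measure of polar coordinates.
The resulting slope bound on `{u > 0}` extends across zeros of `u` along segments, because a
nonnegative function cannot decrease from a zero.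
-/

/-! ### Hausdorff measure of spheres -/

section SphereMeasure

open Module NormedSpace
open scoped Pointwise

variable {E : Type*} [NormedAddCommGroup E] [NormedSpace ℝ E]

lemma dist_normalize_le {x y : E} (hx : x ≠ 0) :
    dist (normalize x) (normalize y) ≤ 2 * ‖x‖⁻¹ * dist x y := by
  have hx' : 0 < ‖x‖ := norm_pos_iff.2 hx
  have hsplit : normalize x - normalize y = ‖x‖⁻¹ • ((x - y) + (‖y‖ - ‖x‖) • normalize y) := by
    rw [sub_smul, norm_smul_normalize, sub_add_sub_cancel, smul_sub, smul_smul,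
      inv_mul_cancel₀ hx'.ne', one_smul, NormedSpace.normalize]
  have hnormalize : ‖normalize y‖ ≤ 1 := by
    rcases eq_or_ne y 0 with rfl | hy
    · simp
    · exact (norm_normalize hy).le
  calc dist (normalize x) (normalize y)
      = ‖x‖⁻¹ * ‖(x - y) + (‖y‖ - ‖x‖) • normalize y‖ := by
        rw [dist_eq_norm, hsplit, norm_smul, norm_inv, norm_norm]
    _ ≤ ‖x‖⁻¹ * (‖x - y‖ + ‖x - y‖ * 1) := by
        gcongr
        refine (norm_add_le _ _).trans ?_
        rw [norm_smul]
        gcongr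
        rw [norm_sub_rev x y]
        exact abs_norm_sub_norm_le y x
    _ = 2 * ‖x‖⁻¹ * dist x y := by rw [dist_eq_norm]; ring

lemma sphere_pi_subset_iUnion_faces (m : ℕ) :
    sphere (0 : Fin (m + 1) → ℝ) 1 ⊆ ⋃ p : Fin (m + 1) × Fin 2,
      p.1.insertNth ((-1) ^ (p.2 : ℕ)) '' closedBall (0 : Fin m → ℝ) 1 := by
  intro y hy
  rw [mem_sphere_zero_iff_norm] at hy
  obtain ⟨i, hi⟩ := Finite.exists_max fun j => ‖y j‖
  have hyi : ‖y i‖ = 1 := le_antisymm (hy ▸ norm_le_pi_norm y i)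
    (hy ▸ (pi_norm_le_iff_of_nonneg (norm_nonneg _)).2 hi)
  have hface : i.removeNth y ∈ closedBall (0 : Fin m → ℝ) 1 := by
    rw [mem_closedBall_zero_iff, pi_norm_le_iff_of_nonneg zero_le_one]
    exact fun j => hyi ▸ hi _
  rw [mem_iUnion]
  rcases eq_or_eq_neg_of_abs_eq hyi with h | h
  · exact ⟨(i, 0), _, hface, by simp [← h]⟩
  · exact ⟨(i, 1), _, hface, by simp [← h]⟩

lemma hausdorffMeasure_sphere_pi_lt_top (m : ℕ) :
    μH[m] (sphere (0 : Fin (m + 1) → ℝ) 1) < ∞ := by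
  refine (measure_mono (sphere_pi_subset_iUnion_faces m)).trans_lt
    ((measure_iUnion_fintype_le _ _).trans_lt (ENNReal.sum_lt_top.2 fun p _ => ?_))
  have hiso : Isometry (p.1.insertNth (α := fun _ => ℝ) ((-1) ^ (p.2 : ℕ))) :=
    Isometry.of_dist_eq fun v w => by simp [Fin.dist_insertNth_insertNth]
  rw [hiso.hausdorffMeasure_image (Or.inl m.cast_nonneg)]
  have hvol := hausdorffMeasure_pi_real (ι := Fin m)
  rw [Fintype.card_fin] at hvol
  rw [hvol]
  exact measure_closedBall_lt_top

lemma sphere_subset_normalize_image {F : Type*} [NormedAddCommGroup F] [NormedSpace ℝ F]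
    (e : F ≃L[ℝ] E) :
    sphere (0 : E) 1 ⊆ (fun x => normalize (e x)) '' sphere (0 : F) 1 := by
  intro y hy
  rw [mem_sphere_zero_iff_norm] at hy
  have hey : e.symm y ≠ 0 := by
    rw [Ne, map_eq_zero_iff e.symm e.symm.injective, ← norm_eq_zero, hy]
    exact one_ne_zero
  refine ⟨normalize (e.symm y), mem_sphere_zero_iff_norm.2 (norm_normalize hey), ?_⟩
  change normalize (e (‖e.symm y‖⁻¹ • e.symm y)) = y
  rw [map_smul, e.apply_symm_apply,
    normalize_smul_of_pos (inv_pos.2 (norm_pos_iff.2 hey)), normalize_eq_self_of_norm_eq_one hy]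

lemma cone_subset_iUnion_ball {A : Set E} {ω : E} {ε : ℝ} (hε : 0 < ε) (hω : ‖ω‖ = 1)
    (hA : ∀ a ∈ A, dist a ω ≤ ε) :
    Ioo (0 : ℝ) 1 • A ⊆
      ⋃ k ∈ Finset.range (⌊1 / ε⌋₊ + 1), ball (((k : ℝ) * ε) • ω) (3 * ε) := by
  rintro _ ⟨t, ⟨ht0, ht1⟩, a, ha, rfl⟩
  simp only [mem_iUnion, Finset.mem_range, exists_prop]
  refine ⟨⌊t / ε⌋₊, Nat.lt_succ_of_le (Nat.floor_le_floor (by gcongr)), ?_⟩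
  have hangular : dist (t • a) (t • ω) ≤ ε := by
    rw [dist_smul₀, Real.norm_eq_abs, abs_of_pos ht0]
    exact (mul_le_of_le_one_left dist_nonneg ht1.le).trans (hA a ha)
  have hradial : dist (t • ω) (((⌊t / ε⌋₊ : ℝ) * ε) • ω) ≤ ε := by
    have hfloor := Nat.floor_le (div_nonneg ht0.le hε.le)
    have hfloor' := Nat.lt_floor_add_one (t / ε)
    rw [le_div_iff₀ hε] at hfloor
    rw [div_lt_iff₀ hε] at hfloor'
    rw [dist_eq_norm, ← sub_smul, norm_smul, hω, mul_one, Real.norm_eq_abs, abs_le]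
    constructor <;> linarith
  calc dist (t • a) (((⌊t / ε⌋₊ : ℝ) * ε) • ω)
      ≤ dist (t • a) (t • ω) + dist (t • ω) (((⌊t / ε⌋₊ : ℝ) * ε) • ω) := dist_triangle _ _ _
    _ < 3 * ε := by linarith

lemma preimage_add_smul_sphere (z : E) {r : ℝ} (hr : 0 < r) :
    (fun x => z + r • x) ⁻¹' sphere z r = sphere 0 1 := by
  ext x
  simp [norm_smul, abs_of_pos hr, hr.ne']

lemma finrank_sub_one_nonneg [FiniteDimensional ℝ E] [Nontrivial E] : (0 : ℝ) ≤ finrank ℝ E - 1 :=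
  sub_nonneg.2 (Nat.one_le_cast.2 finrank_pos)

variable [MeasurableSpace E] [BorelSpace E]

lemma map_add_smul_hausdorffMeasure {d : ℝ} (hd : 0 ≤ d) (z : E) {r : ℝ}
    (hr : r ≠ 0) :
    (μH[d] : Measure E).map (fun x => z + r • x) = ‖r‖₊⁻¹ ^ d • μH[d] := by
  have hsmul : (μH[d] : Measure E).map (fun x => r • x) = ‖r‖₊⁻¹ ^ d • μH[d] := by
    have := map_homothety_hausdorffMeasure hd (0 : E) hr
    rwa [show ⇑(AffineMap.homothety (0 : E) r) = fun x => r • x by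
      ext x; simp [AffineMap.homothety_apply]] at this
  calc (μH[d] : Measure E).map (fun x => z + r • x)
      = ((μH[d] : Measure E).map (fun x => r • x)).map (IsometryEquiv.addLeft z) :=
        (Measure.map_map (by fun_prop) (by fun_prop)).symm
    _ = ‖r‖₊⁻¹ ^ d • μH[d] := by
        rw [hsmul, Measure.map_smul, IsometryEquiv.map_hausdorffMeasure]

lemma smul_hausdorffMeasure_sphere {d : ℝ} (hd : 0 ≤ d) (z : E) {r : ℝ} (hr : 0 < r) :
    ‖r‖₊⁻¹ ^ d • μH[d] (sphere z r) = μH[d] (sphere (0 : E) 1) := by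
  rw [← Measure.smul_apply, ← map_add_smul_hausdorffMeasure hd z hr.ne',
    Measure.map_apply (by fun_prop) isClosed_sphere.measurableSet, preimage_add_smul_sphere z hr]

lemma smul_setLIntegral_sphere_hausdorffMeasure {d : ℝ} (hd : 0 ≤ d) {F : E → ℝ≥0∞}
    (hF : Measurable F) (z : E) {r : ℝ} (hr : 0 < r) :
    ‖r‖₊⁻¹ ^ d • ∫⁻ y in sphere z r, F y ∂μH[d] = ∫⁻ ω in sphere 0 1, F (z + r • ω) ∂μH[d] := by
  rw [← lintegral_smul_measure, ← Measure.restrict_smul,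
    ← map_add_smul_hausdorffMeasure hd z hr.ne',
    setLIntegral_map isClosed_sphere.measurableSet hF (by fun_prop), preimage_add_smul_sphere z hr]

lemma setLAverage_sphere_hausdorffMeasure {d : ℝ} (hd : 0 ≤ d) {F : E → ℝ≥0∞}
    (hF : Measurable F) (z : E) {r : ℝ} (hr : 0 < r) :
    ⨍⁻ y in sphere z r, F y ∂μH[d] = ⨍⁻ ω in sphere 0 1, F (z + r • ω) ∂μH[d] := by
  have hc : ((‖r‖₊⁻¹ ^ d : ℝ≥0) : ℝ≥0∞) ≠ 0 := by simp [NNReal.rpow_eq_zero_iff, hr.ne']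
  rw [setLAverage_eq, setLAverage_eq, ← smul_setLIntegral_sphere_hausdorffMeasure hd hF z hr,
    ← smul_hausdorffMeasure_sphere hd z hr, ENNReal.smul_def, ENNReal.smul_def, smul_eq_mul,
    smul_eq_mul, ENNReal.mul_div_mul_left _ _ hc ENNReal.coe_ne_top]

variable [FiniteDimensional ℝ E]

theorem hausdorffMeasure_unitSphere_lt_top [Nontrivial E] :
    μH[(finrank ℝ E - 1 : ℝ)] (sphere (0 : E) 1) < ∞ := by
  obtain ⟨m, hm⟩ := Nat.exists_eq_add_one.2 (finrank_pos (R := ℝ) (M := E))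
  let e : (Fin (m + 1) → ℝ) ≃L[ℝ] E := ContinuousLinearEquiv.ofFinrankEq (by simp [hm])
  have hexp : (finrank ℝ E - 1 : ℝ) = m := by simp [hm]
  have hlip : LipschitzOnWith (2 * ‖(e.symm : E →L[ℝ] Fin (m + 1) → ℝ)‖₊ *
      ‖(e : (Fin (m + 1) → ℝ) →L[ℝ] E)‖₊) (fun x => normalize (e x)) (sphere 0 1) := by
    refine LipschitzOnWith.of_dist_le_mul fun x hx y _ => ?_
    rw [mem_sphere_zero_iff_norm] at hx
    have hx0 : e x ≠ 0 := by
      rw [Ne, map_eq_zero_iff e e.injective, ← norm_eq_zero, hx]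
      exact one_ne_zero
    have hnorm : ‖e x‖⁻¹ ≤ ‖(e.symm : E →L[ℝ] Fin (m + 1) → ℝ)‖ := by
      rw [inv_le_iff_one_le_mul₀ (norm_pos_iff.2 hx0)]
      simpa [hx] using (e.symm : E →L[ℝ] Fin (m + 1) → ℝ).le_opNorm (e x)
    calc dist (normalize (e x)) (normalize (e y))
        ≤ 2 * ‖e x‖⁻¹ * dist (e x) (e y) := dist_normalize_le hx0
      _ ≤ 2 * ‖(e.symm : E →L[ℝ] Fin (m + 1) → ℝ)‖ *
            (‖(e : (Fin (m + 1) → ℝ) →L[ℝ] E)‖ * dist x y) := by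
          gcongr
          exact (e : (Fin (m + 1) → ℝ) →L[ℝ] E).lipschitz.dist_le_mul x y
      _ = _ := by simp [mul_assoc]
  rw [hexp]
  refine (measure_mono (sphere_subset_normalize_image e)).trans_lt
    ((hlip.hausdorffMeasure_image_le m.cast_nonneg).trans_lt (ENNReal.mul_lt_top ?_ ?_))
  · exact ENNReal.rpow_lt_top_of_nonneg m.cast_nonneg ENNReal.coe_ne_top
  · exact hausdorffMeasure_sphere_pi_lt_top m

theorem hausdorffMeasure_sphere_lt_top [Nontrivial E] (z : E) {r : ℝ} (hr : 0 < r) :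
    μH[(finrank ℝ E - 1 : ℝ)] (sphere z r) < ∞ := by
  have hunit := hausdorffMeasure_unitSphere_lt_top (E := E)
  rw [← smul_hausdorffMeasure_sphere finrank_sub_one_nonneg z hr, ENNReal.smul_def,
    smul_eq_mul] at hunit
  exact ENNReal.lt_top_of_mul_ne_top_right hunit.ne (by simp [NNReal.rpow_eq_zero_iff, hr.ne'])

variable (μ : Measure E) [μ.IsAddHaarMeasure]

lemma addHaar_cone_le {A : Set E} {ε : ℝ} (hε : 0 < ε) (hε1 : ε ≤ 1) (hA : A ⊆ sphere 0 1)
    (hdist : ∀ a ∈ A, ∀ b ∈ A, dist a b ≤ ε) :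
    μ (Ioo (0 : ℝ) 1 • A) ≤
      ENNReal.ofReal (2 * 3 ^ finrank ℝ E * ε ^ (finrank ℝ E - 1 : ℝ)) * μ (ball 0 1) := by
  rcases A.eq_empty_or_nonempty with rfl | ⟨ω, hω⟩
  · simp
  have hball (k : ℕ) : μ (ball (((k : ℝ) * ε) • ω) (3 * ε)) =
      ENNReal.ofReal ((3 * ε) ^ finrank ℝ E) * μ (ball 0 1) :=
    μ.addHaar_ball_of_pos _ (by positivity)
  have hnumber : (⌊1 / ε⌋₊ : ℝ) + 1 ≤ 2 * (1 / ε) := by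
    have := Nat.floor_le (one_div_nonneg.2 hε.le)
    have := (one_le_div hε).2 hε1
    linarith
  calc μ (Ioo (0 : ℝ) 1 • A)
      ≤ ∑ k ∈ Finset.range (⌊1 / ε⌋₊ + 1), μ (ball (((k : ℝ) * ε) • ω) (3 * ε)) :=
        (measure_mono (cone_subset_iUnion_ball hε (mem_sphere_zero_iff_norm.1 (hA hω))
          fun a ha => hdist a ha ω hω)).trans (measure_biUnion_finset_le _ _)
    _ = ENNReal.ofReal (((⌊1 / ε⌋₊ : ℝ) + 1) * (3 * ε) ^ finrank ℝ E) * μ (ball 0 1) := by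
        simp only [hball, Finset.sum_const, Finset.card_range, nsmul_eq_mul]
        rw [ENNReal.ofReal_mul (by positivity), ← mul_assoc, ← ENNReal.ofReal_natCast]
        push_cast
        rfl
    _ ≤ ENNReal.ofReal (2 * (1 / ε) * (3 * ε) ^ finrank ℝ E) * μ (ball 0 1) := by gcongr
    _ = _ := by
        rw [Real.rpow_sub hε, Real.rpow_natCast, Real.rpow_one, mul_pow]
        congr 2
        field_simp

lemma toSphere_le_of_ediam_le {s : Set (sphere (0 : E) 1)} {ε : ℝ} (hε : 0 < ε) (hε1 : ε ≤ 1)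
    (hs : ediam s ≤ ENNReal.ofReal ε) :
    μ.toSphere s ≤ finrank ℝ E * (ENNReal.ofReal (2 * 3 ^ finrank ℝ E) * μ (ball 0 1)) *
      ENNReal.ofReal ε ^ (finrank ℝ E - 1 : ℝ) := by
  have hdist : ∀ a ∈ Subtype.val '' closure s, ∀ b ∈ Subtype.val '' closure s,
      dist a b ≤ ε := by
    rintro _ ⟨a, ha, rfl⟩ _ ⟨b, hb, rfl⟩
    have hab := (edist_le_ediam_of_mem ha hb).trans ((ediam_closure s).trans_le hs)
    rwa [edist_dist, ENNReal.ofReal_le_ofReal_iff hε.le] at hab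
  calc μ.toSphere s ≤ μ.toSphere (closure s) := measure_mono subset_closure
    _ = finrank ℝ E * μ (Ioo (0 : ℝ) 1 • (Subtype.val '' closure s)) :=
        μ.toSphere_apply' isClosed_closure.measurableSet
    _ ≤ finrank ℝ E * (ENNReal.ofReal (2 * 3 ^ finrank ℝ E * ε ^ (finrank ℝ E - 1 : ℝ)) *
          μ (ball 0 1)) := by
        gcongr
        exact addHaar_cone_le μ hε hε1 (Subtype.coe_image_subset _ _) hdist
    _ = _ := by
        rw [ENNReal.ofReal_mul (by positivity), ← ENNReal.ofReal_rpow_of_pos hε]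
        ring

theorem exists_toSphere_le_smul_hausdorffMeasure [Nontrivial E] :
    ∃ C : ℝ≥0∞, C ≠ ∞ ∧ μ.toSphere ≤ C • μH[(finrank ℝ E - 1 : ℝ)] := by
  set C : ℝ≥0∞ := finrank ℝ E * (ENNReal.ofReal (2 * 3 ^ finrank ℝ E) * μ (ball 0 1))
  have hC0 : C ≠ 0 := by
    simpa [C, finrank_pos.ne'] using (measure_ball_pos μ (0 : E) one_pos).ne'
  have hC : C ≠ ∞ := ENNReal.mul_ne_top (ENNReal.natCast_ne_top _)
    (ENNReal.mul_ne_top ENNReal.ofReal_ne_top measure_ball_lt_top.ne)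
  refine ⟨C, hC, ?_⟩
  have hle : C⁻¹ • μ.toSphere ≤ μH[(finrank ℝ E - 1 : ℝ)] := by
    refine Measure.le_hausdorffMeasure _ _ (1 / 2) (by simp) fun s hs => ?_
    have hs_top : ediam s ≠ ∞ := ne_top_of_le_ne_top (by simp) hs
    have hs1 : (ediam s).toReal < 1 :=
      (ENNReal.toReal_mono (by simp) hs).trans_lt (by norm_num)
    rw [Measure.smul_apply, smul_eq_mul, ← ENNReal.div_eq_inv_mul]
    refine ENNReal.div_le_of_le_mul' ?_
    -- `s` may be a single point, so its diameter is approached from above.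
    have hlim : Tendsto (fun ε : ℝ => C * ENNReal.ofReal ε ^ (finrank ℝ E - 1 : ℝ))
        (𝓝[>] (ediam s).toReal) (𝓝 (C * ediam s ^ (finrank ℝ E - 1 : ℝ))) := by
      have hcont := (ENNReal.continuous_rpow_const (y := (finrank ℝ E - 1 : ℝ))).comp
        ENNReal.continuous_ofReal
      have := hcont.tendsto (ediam s).toReal
      rw [Function.comp_apply, ENNReal.ofReal_toReal hs_top] at this
      exact ENNReal.Tendsto.const_mul (this.mono_left nhdsWithin_le_nhds) (Or.inr hC)
    refine ge_of_tendsto hlim ?_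
    filter_upwards [Ioc_mem_nhdsGT hs1] with ε hε
    exact toSphere_le_of_ediam_le μ (ENNReal.toReal_nonneg.trans_lt hε.1) hε.2
      (ENNReal.le_ofReal_iff_toReal_le hs_top (ENNReal.toReal_nonneg.trans hε.1.le) |>.2 hε.1.le)
  intro s
  have := hle s
  rwa [Measure.smul_apply, smul_eq_mul, ← ENNReal.div_eq_inv_mul,
    ENNReal.div_le_iff' hC0 hC] at this

lemma lintegral_eq_lintegral_lintegral_toSphere [Nontrivial E] {G : E → ℝ≥0∞}
    (hG : Measurable G) :
    ∫⁻ y, G y ∂μ = ∫⁻ r : Ioi (0 : ℝ), ∫⁻ ω : sphere (0 : E) 1, G (r.1 • ω.1) ∂μ.toSphere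
      ∂(Measure.volumeIoiPow (finrank ℝ E - 1)) := by
  have hmeas : Measurable fun p : sphere (0 : E) 1 × Ioi (0 : ℝ) => G (p.2.1 • p.1.1) :=
    hG.comp (by fun_prop)
  calc ∫⁻ y, G y ∂μ
      = ∫⁻ y : ({0}ᶜ : Set E), G y ∂(μ.comap Subtype.val) := by
        rw [lintegral_subtype_comap (measurableSet_singleton _).compl, restrict_compl_singleton]
    _ = ∫⁻ y : ({0}ᶜ : Set E),
          G ((homeomorphUnitSphereProd E y).2.1 • (homeomorphUnitSphereProd E y).1.1)
            ∂(μ.comap Subtype.val) := by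
        refine lintegral_congr fun y => ?_
        have hy : ‖(y : E)‖ ≠ 0 := norm_ne_zero_iff.2 y.2
        simp [smul_smul, hy]
    _ = ∫⁻ p, G (p.2.1 • p.1.1)
          ∂(μ.toSphere.prod (Measure.volumeIoiPow (finrank ℝ E - 1))) :=
        μ.measurePreserving_homeomorphUnitSphereProd.lintegral_comp hmeas
    _ = _ := lintegral_prod_symm' _ hmeas

lemma exists_lintegral_toSphere_le_setLAverage [Nontrivial E] :
    ∃ C : ℝ≥0∞, C ≠ ∞ ∧ ∀ F : E → ℝ≥0∞, Measurable F → ∀ (z : E) (r : ℝ), 0 < r →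
      ∫⁻ ω : sphere (0 : E) 1, F (z + r • ω.1) ∂μ.toSphere ≤
        C * ⨍⁻ y in sphere z r, F y ∂μH[(finrank ℝ E - 1 : ℝ)] := by
  have hd := finrank_sub_one_nonneg (E := E)
  obtain ⟨C, hC, hle⟩ := exists_toSphere_le_smul_hausdorffMeasure μ
  have hsphere := (hausdorffMeasure_unitSphere_lt_top (E := E)).ne
  refine ⟨C * μH[(finrank ℝ E - 1 : ℝ)] (sphere (0 : E) 1), ENNReal.mul_ne_top hC hsphere,
    fun F hF z r hr => ?_⟩
  have hmap := (isometry_subtype_coe (s := sphere (0 : E) 1)).map_hausdorffMeasure (Or.inl hd)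
  rw [Subtype.range_coe] at hmap
  calc ∫⁻ ω : sphere (0 : E) 1, F (z + r • ω.1) ∂μ.toSphere
      ≤ ∫⁻ ω : sphere (0 : E) 1, F (z + r • ω.1) ∂(C • μH[(finrank ℝ E - 1 : ℝ)]) :=
        lintegral_mono' hle le_rfl
    _ = C * ∫⁻ ω in sphere (0 : E) 1, F (z + r • ω) ∂μH[(finrank ℝ E - 1 : ℝ)] := by
        have hFzr : Measurable fun ω => F (z + r • ω) := hF.comp (by fun_prop)
        rw [lintegral_smul_measure, smul_eq_mul, ← hmap, lintegral_map hFzr measurable_subtype_coe]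
    _ = _ := by
        rw [mul_assoc, setLAverage_sphere_hausdorffMeasure hd hF z hr,
          measure_mul_setLAverage _ hsphere]

lemma lintegral_volumeIoiPow_indicator_Iio_le {d : ℕ} (hd : 0 < d) {ρ : ℝ} (hρ : 0 < ρ)
    (a : ℝ≥0∞) :
    ∫⁻ r : Ioi (0 : ℝ), (Iio ⟨ρ, hρ⟩).indicator (fun _ => a) r ∂(Measure.volumeIoiPow (d - 1)) ≤
      a * ENNReal.ofReal (ρ ^ d) := by
  obtain ⟨m, rfl⟩ := Nat.exists_eq_add_one.2 hd
  rw [lintegral_indicator_const measurableSet_Iio, Measure.volumeIoiPow_apply_Iio]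
  gcongr
  exact div_le_self (by positivity) (by simp)

theorem exists_setLIntegral_ball_le_of_setLAverage_sphere_le [Nontrivial E] :
    ∃ K : ℝ≥0∞, K ≠ ∞ ∧ ∀ F : E → ℝ≥0∞, Measurable F → ∀ (z : E) (ρ : ℝ), 0 < ρ →
      ∀ a : ℝ≥0∞,
      (∀ r, 0 < r → r < ρ → ⨍⁻ y in sphere z r, F y ∂μH[(finrank ℝ E - 1 : ℝ)] ≤ a) →
      ∫⁻ y in ball z ρ, F y ∂μ ≤ K * a * ENNReal.ofReal (ρ ^ finrank ℝ E) := by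
  obtain ⟨K, hK, hle⟩ := exists_lintegral_toSphere_le_setLAverage μ
  refine ⟨K, hK, fun F hF z ρ hρ a ha => ?_⟩
  have hG : Measurable fun y => (ball z ρ).indicator F (z + y) :=
    (hF.indicator measurableSet_ball).comp (measurable_const_add z)
  rw [← lintegral_indicator measurableSet_ball,
    ← lintegral_add_left_eq_self ((ball z ρ).indicator F) z,
    lintegral_eq_lintegral_lintegral_toSphere μ hG]
  refine (lintegral_mono fun r => ?_).trans
    (lintegral_volumeIoiPow_indicator_Iio_le finrank_pos hρ (K * a))
  have hmem (ω : sphere (0 : E) 1) : z + r.1 • ω.1 ∈ ball z ρ ↔ r.1 < ρ := by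
    simp [norm_smul, abs_of_pos r.2.out]
  by_cases hr : r.1 < ρ
  · rw [indicator_of_mem (show r ∈ Iio (⟨ρ, hρ⟩ : Ioi (0 : ℝ)) from hr)]
    simp only [indicator_of_mem ((hmem _).2 hr)]
    exact (hle F hF z r.1 r.2).trans (by gcongr; exact ha r.1 r.2 hr)
  · simp only [indicator_of_notMem (mt (hmem _).1 hr), lintegral_zero, zero_le]

lemma ofReal_setAverage_sphere [Nontrivial E] {u : E → ℝ} {z : E} {r : ℝ} (hr : 0 < r)
    (hu : ContinuousOn u (sphere z r)) (hu0 : ∀ y ∈ sphere z r, 0 ≤ u y) :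
    ENNReal.ofReal (⨍ y in sphere z r, u y ∂μH[(finrank ℝ E - 1 : ℝ)]) =
      ⨍⁻ y in sphere z r, ENNReal.ofReal (u y) ∂μH[(finrank ℝ E - 1 : ℝ)] := by
  have hsphere : MeasurableSet (sphere z r) := isClosed_sphere.measurableSet
  rw [ofReal_setAverage, setLAverage_eq]
  · exact hu.integrableOn_of_subset_isCompact (isCompact_sphere z r) hsphere Subset.rfl
      (hausdorffMeasure_sphere_lt_top z hr).ne
  · exact (ae_restrict_mem hsphere).mono hu0

theorem exists_setIntegral_ball_le_of_setAverage_sphere_le [Nontrivial E] :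
    ∃ K : ℝ, 0 ≤ K ∧ ∀ (u : E → ℝ) (z : E) (ρ C : ℝ), 0 < ρ → ContinuousOn u (ball z ρ) →
      (∀ y ∈ ball z ρ, 0 ≤ u y) →
      (∀ r, 0 < r → r < ρ →
        (1 / r) * ⨍ y in sphere z r, u y ∂μH[(finrank ℝ E - 1 : ℝ)] ≤ C) →
      ∫ y in ball z ρ, u y ∂μ ≤ K * |C| * ρ ^ (finrank ℝ E + 1) := by
  classical
  obtain ⟨K, hK, hle⟩ := exists_setLIntegral_ball_le_of_setLAverage_sphere_le μ
  refine ⟨K.toReal, ENNReal.toReal_nonneg, fun u z ρ C hρ hu hu0 hav => ?_⟩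
  set F : E → ℝ≥0∞ := fun y => ENNReal.ofReal ((ball z ρ).piecewise u 0 y)
  have hF : Measurable F :=
    (hu.measurable_piecewise continuousOn_const measurableSet_ball).ennreal_ofReal
  have hF_eq : EqOn F (fun y => ENNReal.ofReal (u y)) (ball z ρ) := fun y hy => by
    simp only [F, piecewise_eq_of_mem _ _ _ hy]
  have havF : ∀ r, 0 < r → r < ρ →
      ⨍⁻ y in sphere z r, F y ∂μH[(finrank ℝ E - 1 : ℝ)] ≤ ENNReal.ofReal (|C| * ρ) := by
    intro r hr hrρ
    have hsub : sphere z r ⊆ ball z ρ := sphere_subset_ball hrρ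
    rw [setLAverage_congr_fun isClosed_sphere.measurableSet (hF_eq.mono hsub),
      ← ofReal_setAverage_sphere hr (hu.mono hsub) fun y hy => hu0 y (hsub hy)]
    refine ENNReal.ofReal_le_ofReal ?_
    have h := hav r hr hrρ
    rw [one_div, inv_mul_le_iff₀ hr] at h
    nlinarith [le_abs_self C, abs_nonneg C]
  have hball := hle F hF z ρ hρ _ havF
  rw [setLIntegral_congr_fun measurableSet_ball hF_eq] at hball
  rw [integral_eq_lintegral_of_nonneg_ae ((ae_restrict_mem measurableSet_ball).mono hu0)
    (hu.aestronglyMeasurable measurableSet_ball)]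
  refine (ENNReal.toReal_mono (by finiteness) hball).trans_eq ?_
  rw [ENNReal.toReal_mul, ENNReal.toReal_mul, ENNReal.toReal_ofReal (by positivity),
    ENNReal.toReal_ofReal (by positivity)]
  ring

end SphereMeasure

/-! ### Kernel means -/

section Kernel

variable {F : Type*} [NormedAddCommGroup F]

/-- The kernel `(1 - |y|²)₊`. It is Lipschitz, and `-4 (1 - |y|²)₊ y` is the gradient of its
square, so that its means and the means of the Laplacian against its square are related by
integration by parts. -/
def paraboloidKernel (y : F) : ℝ := max 0 (1 - ‖y‖ ^ 2)

lemma paraboloidKernel_nonneg (y : F) : 0 ≤ paraboloidKernel y := le_max_left _ _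

lemma paraboloidKernel_le_one (y : F) : paraboloidKernel y ≤ 1 :=
  max_le zero_le_one (sub_le_self _ (sq_nonneg _))

lemma paraboloidKernel_eq_one_sub_sq (y : F) : paraboloidKernel y = 1 - min ‖y‖ 1 ^ 2 := by
  rcases le_total ‖y‖ 1 with hy | hy
  · rw [min_eq_left hy, paraboloidKernel, max_eq_right]
    exact sub_nonneg.2 (pow_le_one₀ (norm_nonneg y) hy)
  · rw [min_eq_right hy, paraboloidKernel, max_eq_left]
    · norm_num
    · exact sub_nonpos.2 (one_le_pow₀ hy)

lemma paraboloidKernel_eq_zero {y : F} (hy : 1 ≤ ‖y‖) : paraboloidKernel y = 0 := by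
  rw [paraboloidKernel_eq_one_sub_sq, min_eq_right hy, one_pow, sub_self]

lemma abs_sq_sub_sq_le {a b : ℝ} (ha : 0 ≤ a) (ha1 : a ≤ 1) (hb : 0 ≤ b) (hb1 : b ≤ 1) :
    |a ^ 2 - b ^ 2| ≤ 2 * |a - b| := by
  rw [sq_sub_sq, abs_mul, abs_of_nonneg (add_nonneg ha hb)]
  gcongr
  linarith

lemma lipschitzWith_paraboloidKernel : LipschitzWith 2 (paraboloidKernel : F → ℝ) := by
  refine LipschitzWith.of_dist_le_mul fun y z => ?_
  rw [paraboloidKernel_eq_one_sub_sq, paraboloidKernel_eq_one_sub_sq, Real.dist_eq,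
    sub_sub_sub_cancel_left, abs_sub_comm]
  calc |min ‖y‖ 1 ^ 2 - min ‖z‖ 1 ^ 2|
      ≤ 2 * |min ‖y‖ 1 - min ‖z‖ 1| :=
        abs_sq_sub_sq_le (by positivity) (min_le_right _ _) (by positivity) (min_le_right _ _)
    _ ≤ 2 * ‖y - z‖ := by
        gcongr
        refine (abs_min_sub_min_le_max _ _ _ _).trans ?_
        simpa using abs_norm_sub_norm_le y z
    _ = ((2 : ℝ≥0) : ℝ) * dist y z := by rw [dist_eq_norm, NNReal.coe_ofNat]

lemma lipschitzWith_paraboloidKernel_sq :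
    LipschitzWith 4 (fun y : F => paraboloidKernel y ^ 2) := by
  refine LipschitzWith.of_dist_le_mul fun y z => ?_
  calc |paraboloidKernel y ^ 2 - paraboloidKernel z ^ 2|
      ≤ 2 * dist (paraboloidKernel y) (paraboloidKernel z) :=
        abs_sq_sub_sq_le (paraboloidKernel_nonneg y) (paraboloidKernel_le_one y)
          (paraboloidKernel_nonneg z) (paraboloidKernel_le_one z)
    _ ≤ 2 * (2 * dist y z) := by
        gcongr
        exact lipschitzWith_paraboloidKernel.dist_le_mul y z
    _ = ((4 : ℝ≥0) : ℝ) * dist y z := by rw [NNReal.coe_ofNat]; ring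

lemma hasDerivAt_max_zero_sq (t : ℝ) :
    HasDerivAt (fun t : ℝ => max 0 t ^ 2) (2 * max 0 t) t := by
  rcases lt_trichotomy t 0 with ht | rfl | ht
  · rw [max_eq_left ht.le, mul_zero]
    refine (hasDerivAt_const t (0 : ℝ)).congr_of_eventuallyEq ?_
    filter_upwards [eventually_lt_nhds ht] with s hs
    simp [max_eq_left hs.le]
  · have hbound : (fun t : ℝ => max 0 t ^ 2) =O[𝓝 0] fun t : ℝ => t ^ 2 := by
      refine Asymptotics.IsBigO.of_bound 1 (Eventually.of_forall fun t => ?_)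
      rw [one_mul, norm_pow, norm_pow, Real.norm_eq_abs, Real.norm_eq_abs]
      refine pow_le_pow_left₀ (abs_nonneg _) ?_ 2
      simpa only [max_self, sub_zero, max_comm t 0] using abs_max_sub_max_le_abs t 0 0
    rw [hasDerivAt_iff_isLittleO]
    simpa using hbound.trans_isLittleO (Asymptotics.isLittleO_pow_id one_lt_two)
  · rw [max_eq_right ht.le]
    have hsq : HasDerivAt (fun t : ℝ => t ^ 2) (2 * t) t := by simpa using hasDerivAt_pow 2 t
    refine hsq.congr_of_eventuallyEq ?_
    filter_upwards [eventually_gt_nhds ht] with s hs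
    rw [max_eq_right hs.le]

lemma hasCompactSupport_of_eq_zero_of_one_le_norm [ProperSpace F] {k : F → ℝ}
    (hk : ∀ y, 1 ≤ ‖y‖ → k y = 0) : HasCompactSupport k :=
  HasCompactSupport.intro (isCompact_closedBall 0 1) fun y hy => by
    rw [mem_closedBall_zero_iff, not_le] at hy
    exact hk y hy.le

lemma abs_sub_translate_le {k : F → ℝ} {K : ℝ≥0} (hk : LipschitzWith K k)
    (hk0 : ∀ y, 1 ≤ ‖y‖ → k y = 0) (y h : F) :
    |k y - k (y - h)| ≤
      K * ‖h‖ * ((ball 0 1).indicator 1 y + (ball 0 1).indicator 1 (y - h)) := by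
  have hlip : |k y - k (y - h)| ≤ K * ‖h‖ := by
    simpa only [Real.dist_eq, dist_self_sub_right] using hk.dist_le_mul y (y - h)
  have hKh : 0 ≤ K * ‖h‖ := by positivity
  by_cases hy : y ∈ ball 0 1 <;> by_cases hyh : y - h ∈ ball 0 1
  · rw [indicator_of_mem hy, indicator_of_mem hyh, Pi.one_apply, Pi.one_apply]
    linarith
  · rw [indicator_of_mem hy, indicator_of_notMem hyh, Pi.one_apply]
    linarith
  · rw [indicator_of_notMem hy, indicator_of_mem hyh, Pi.one_apply]
    linarith
  · rw [mem_ball_zero_iff, not_lt] at hy hyh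
    rw [hk0 y hy, hk0 _ hyh, sub_self, abs_zero]
    exact mul_nonneg hKh (add_nonneg (indicator_nonneg (by simp) _) (indicator_nonneg (by simp) _))

variable [InnerProductSpace ℝ F]

lemma hasFDerivAt_paraboloidKernel_sq (y : F) :
    HasFDerivAt (fun y : F => paraboloidKernel y ^ 2)
      (-(4 * paraboloidKernel y) • innerSL ℝ y) y := by
  have hinner : HasFDerivAt (fun y : F => 1 - ‖y‖ ^ 2) (-(2 • innerSL ℝ y)) y :=
    (hasStrictFDerivAt_norm_sq y).hasFDerivAt.const_sub 1
  refine ((hasDerivAt_max_zero_sq (1 - ‖y‖ ^ 2)).comp_hasFDerivAt y hinner).congr_fderiv ?_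
  ext v
  simp only [paraboloidKernel, smul_apply, neg_apply,
    smul_eq_mul, nsmul_eq_mul]
  push_cast
  ring

lemma differentiable_paraboloidKernel_sq : Differentiable ℝ fun y : F => paraboloidKernel y ^ 2 :=
  fun y => (hasFDerivAt_paraboloidKernel_sq y).differentiableAt

end Kernel

section KernelMean

variable {F : Type*} [NormedAddCommGroup F] [InnerProductSpace ℝ F] [FiniteDimensional ℝ F]
  [MeasurableSpace F] [BorelSpace F] {k v : F → ℝ}

/-- The mean `∫ k(y) v(x + r y) dy` of `v` at `x` and scale `r` against the kernel `k`, which is not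
required to have total mass one. -/
def kernelMean (k v : F → ℝ) (x : F) (r : ℝ) : ℝ := ∫ y, k y * v (x + r • y)

lemma integral_mul_translate_eq (k v : F → ℝ) (x x' : F) {r : ℝ} (hr : r ≠ 0) :
    ∫ y, k y * v (x' + r • y) = ∫ y, k (y - r⁻¹ • (x' - x)) * v (x + r • y) := by
  rw [← integral_sub_right_eq_self _ (r⁻¹ • (x' - x))]
  congr with y
  congr 2
  rw [smul_sub, smul_smul, mul_inv_cancel₀ hr, one_smul]
  abel

lemma integral_indicator_one_mul {α : Type*} [MeasurableSpace α] {μ : Measure α} (g : α → ℝ)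
    {s : Set α} (hs : MeasurableSet s) : ∫ y, s.indicator 1 y * g y ∂μ = ∫ y in s, g y ∂μ := by
  rw [← integral_indicator hs]
  congr with y
  rw [← indicator_mul_left]
  simp

lemma integrable_indicator_ball_mul {g : F → ℝ} (hg : Continuous g) :
    Integrable fun y => (ball (0 : F) 1).indicator 1 y * g y := by
  have hon : IntegrableOn g (ball 0 1) :=
    (hg.continuousOn.integrableOn_compact (isCompact_closedBall 0 1)).mono_set
      ball_subset_closedBall
  refine (hon.integrable_indicator measurableSet_ball).congr (Eventually.of_forall fun y => ?_)
  simp only [← indicator_mul_left, Pi.one_apply, one_mul]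

lemma abs_kernelMean_sub_kernelMean_le {K : ℝ≥0} (hk : LipschitzWith K k)
    (hk0 : ∀ y, 1 ≤ ‖y‖ → k y = 0) (hv : Continuous v) (x x' : F) {r : ℝ} (hr : 0 < r) :
    |kernelMean k v x r - kernelMean k v x' r| ≤
      K * (r⁻¹ * ‖x - x'‖) *
        ((∫ y in ball 0 1, |v (x + r • y)|) + ∫ y in ball 0 1, |v (x' + r • y)|) := by
  set h : F := r⁻¹ • (x' - x) with hh
  have hh_norm : ‖h‖ = r⁻¹ * ‖x - x'‖ := by
    rw [hh, norm_smul, norm_inv, Real.norm_eq_abs, abs_of_pos hr, norm_sub_rev]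
  have hkc := hasCompactSupport_of_eq_zero_of_one_le_norm hk0
  have hkcont := hk.continuous
  have hint : Integrable fun y => k y * v (x + r • y) :=
    Continuous.integrable_of_hasCompactSupport (by fun_prop) hkc.mul_right
  have hint_translate : Integrable fun y => k (y - h) * v (x + r • y) :=
    Continuous.integrable_of_hasCompactSupport (by fun_prop)
      (hkc.comp_homeomorph (Homeomorph.subRight h)).mul_right
  have hball := integrable_indicator_ball_mul (g := fun y => |v (x + r • y)|) (by fun_prop)
  have hball_translate :
      Integrable fun y => (ball (0 : F) 1).indicator 1 (y - h) * |v (x + r • y)| := by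
    have := (integrable_indicator_ball_mul
      (g := fun y => |v (x' + r • y)|) (by fun_prop)).comp_sub_right h
    refine this.congr (Eventually.of_forall fun y => ?_)
    simp only [hh, smul_sub, smul_inv_smul₀ hr.ne']
    congr 3
    abel
  rw [← hh_norm, kernelMean, kernelMean, integral_mul_translate_eq k v x x' hr.ne',
    ← integral_sub hint hint_translate, ← integral_indicator_one_mul _ measurableSet_ball,
    ← integral_indicator_one_mul _ measurableSet_ball,
    integral_mul_translate_eq _ (fun z => |v z|) x x' hr.ne', ← integral_add hball hball_translate,
    ← integral_const_mul, ← Real.norm_eq_abs]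
  refine norm_integral_le_of_norm_le ((hball.add hball_translate).const_mul _)
    (Eventually.of_forall fun y => ?_)
  rw [← sub_mul, ← add_mul, ← mul_assoc, norm_mul, Real.norm_eq_abs, Real.norm_eq_abs]
  gcongr
  exact abs_sub_translate_le hk hk0 y h

lemma kernelMean_zero (k v : F → ℝ) (x : F) : kernelMean k v x 0 = (∫ y, k y) * v x := by
  simp only [kernelMean, zero_smul, add_zero, integral_mul_const]

lemma setIntegral_ball_comp_add_smul (g : F → ℝ) (x : F) {r : ℝ} (hr : 0 < r) :
    ∫ y in ball 0 1, g (x + r • y) = (r ^ Module.finrank ℝ F)⁻¹ * ∫ z in ball x r, g z := by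
  have hpre : (x + ·) ⁻¹' ball x r = ball (0 : F) r := by
    rw [preimage_add_ball, sub_self]
  rw [Measure.setIntegral_comp_smul_of_pos volume (fun z => g (x + z)) _ hr,
    smul_unitBall_of_pos hr, smul_eq_mul, ← hpre,
    (measurePreserving_add_left volume x).setIntegral_preimage_emb (measurableEmbedding_addLeft x)]

lemma abs_kernelMean_sub_kernelMean_le_of_bound {K : ℝ≥0} (hk : LipschitzWith K k)
    (hk0 : ∀ y, 1 ≤ ‖y‖ → k y = 0) (hv : Continuous v) {x x' : F} {r M : ℝ} (hr : 0 < r)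
    (hM : ∀ z ∈ ball x r ∪ ball x' r, |v z| ≤ M) :
    |kernelMean k v x r - kernelMean k v x' r| ≤
      K * (r⁻¹ * ‖x - x'‖) * (2 * M * volume.real (ball (0 : F) 1)) := by
  have hmem (p y : F) (hy : y ∈ ball (0 : F) 1) : p + r • y ∈ ball p r := by
    rw [mem_ball_zero_iff] at hy
    rw [mem_ball_iff_norm, add_sub_cancel_left, norm_smul, Real.norm_of_nonneg hr.le]
    exact mul_lt_of_lt_one_right hr hy
  have hint (p : F) (hp : ∀ z ∈ ball p r, |v z| ≤ M) :
      ∫ y in ball 0 1, |v (p + r • y)| ≤ M * volume.real (ball (0 : F) 1) :=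
    (Real.le_norm_self _).trans <| norm_setIntegral_le_of_norm_le_const measure_ball_lt_top
      fun y hy => by
        rw [Real.norm_eq_abs, abs_abs]
        exact hp _ (hmem p y hy)
  refine (abs_kernelMean_sub_kernelMean_le hk hk0 hv x x' hr).trans ?_
  gcongr
  linarith [hint x fun z hz => hM z (Or.inl hz), hint x' fun z hz => hM z (Or.inr hz)]

lemma hasDerivAt_kernelMean (hk : Continuous k) (hk0 : ∀ y, 1 ≤ ‖y‖ → k y = 0)
    (hv : ContDiff ℝ 1 v) (x : F) (r : ℝ) :
    HasDerivAt (kernelMean k v x) (∫ y, k y * fderiv ℝ v (x + r • y) y) r := by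
  have hkc := hasCompactSupport_of_eq_zero_of_one_le_norm hk0
  have hvc := hv.continuous
  have hderiv_cont : Continuous fun p : ℝ × F => k p.2 * fderiv ℝ v (x + p.1 • p.2) p.2 := by
    have : Continuous fun p : ℝ × F => fderiv ℝ v (x + p.1 • p.2) :=
      (hv.continuous_fderiv one_ne_zero).comp (by fun_prop)
    fun_prop
  obtain ⟨M, hM⟩ := ((isCompact_closedBall r 1).prod
    (isCompact_closedBall (0 : F) 1)).exists_bound_of_continuousOn hderiv_cont.continuousOn
  refine (hasDerivAt_integral_of_dominated_loc_of_deriv_le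
    (F := fun (r : ℝ) y => k y * v (x + r • y))
    (F' := fun (r : ℝ) y => k y * fderiv ℝ v (x + r • y) y)
    (bound := indicator (closedBall 0 1) fun _ => M)
    (closedBall_mem_nhds r one_pos) ?_ ?_ ?_ ?_ ?_ ?_).2
  · exact Eventually.of_forall fun s => Continuous.aestronglyMeasurable (by fun_prop)
  · exact Continuous.integrable_of_hasCompactSupport (by fun_prop) hkc.mul_right
  · exact (hderiv_cont.comp (Continuous.prodMk_right r)).aestronglyMeasurable
  · refine Eventually.of_forall fun y s hs => ?_
    by_cases hy : y ∈ closedBall (0 : F) 1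
    · rw [indicator_of_mem hy]
      exact hM (s, y) ⟨hs, hy⟩
    · rw [indicator_of_notMem hy]
      rw [mem_closedBall_zero_iff, not_le] at hy
      rw [hk0 y hy.le, zero_mul, norm_zero]
  · rw [integrable_indicator_iff measurableSet_closedBall]
    exact integrableOn_const measure_closedBall_lt_top.ne
  · refine Eventually.of_forall fun y s _ => ?_
    have hline : HasDerivAt (fun s : ℝ => x + s • y) y s := by
      simpa using ((hasDerivAt_id s).smul_const y).const_add x
    have hdiff := (hv.differentiable one_ne_zero (x + s • y)).hasFDerivAt
    exact (hdiff.comp_hasDerivAt s hline).const_mul (k y)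

lemma integral_paraboloidKernel_sq_mul_fderiv {g : F → ℝ} (hg : ContDiff ℝ 1 g) (e : F) :
    ∫ y, paraboloidKernel y ^ 2 * fderiv ℝ g y e =
      4 * ∫ y, paraboloidKernel y * ⟪y, e⟫ * g y := by
  have hkcont : Continuous (paraboloidKernel : F → ℝ) := lipschitzWith_paraboloidKernel.continuous
  have hkc : HasCompactSupport (paraboloidKernel : F → ℝ) :=
    hasCompactSupport_of_eq_zero_of_one_le_norm fun y => paraboloidKernel_eq_zero
  have hk2c : HasCompactSupport fun y : F => paraboloidKernel y ^ 2 :=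
    hkc.comp_left (zero_pow two_ne_zero)
  have hgc := hg.continuous
  have := hg.continuous_fderiv one_ne_zero
  have hfderiv (y : F) : fderiv ℝ (fun y : F => paraboloidKernel y ^ 2) y e =
      -(4 * (paraboloidKernel y * ⟪y, e⟫)) := by
    rw [(hasFDerivAt_paraboloidKernel_sq y).fderiv, smul_apply, innerSL_apply_apply, smul_eq_mul]
    ring
  rw [integral_mul_fderiv_eq_neg_fderiv_mul_of_integrable]
  · simp only [hfderiv, neg_mul, integral_neg, neg_neg, mul_assoc (4 : ℝ), integral_const_mul]
  · simp only [hfderiv]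
    refine Continuous.integrable_of_hasCompactSupport (by fun_prop) ?_
    exact HasCompactSupport.mul_right (hkc.mul_right.mul_left.comp_left neg_zero)
  · exact Continuous.integrable_of_hasCompactSupport (by fun_prop) hk2c.mul_right
  · exact Continuous.integrable_of_hasCompactSupport (by fun_prop) hk2c.mul_right
  · exact fun y _ => differentiable_paraboloidKernel_sq y
  · exact fun y _ => hg.differentiable one_ne_zero y

end KernelMean

/-! ### Interior gradient estimate -/

lemma fderiv_comp_add_smul_apply {E : Type*} [NormedAddCommGroup E] [NormedSpace ℝ E] (w : E → ℝ)
    (x y e : E) (r : ℝ) :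
    fderiv ℝ (fun y => w (x + r • y)) y e = r * fderiv ℝ w (x + r • y) e := by
  rw [fderiv_comp_smul (f := fun z => w (x + z)) r, fderiv_comp_add_left x, smul_apply,
    smul_eq_mul]

section Laplacian

variable {u v : EuclideanSpace ℝ (Fin n) → ℝ} {x : EuclideanSpace ℝ (Fin n)}

lemma contDiff_fderiv_apply (hv : ContDiff ℝ 2 v) (e : EuclideanSpace ℝ (Fin n)) :
    ContDiff ℝ 1 fun y => fderiv ℝ v y e :=
  (hv.fderiv_right one_add_one_eq_two.le).clm_apply contDiff_const

lemma continuous_lap (hv : ContDiff ℝ 2 v) : Continuous (lap v) :=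
  continuous_finsetSum _ fun _ _ =>
    ((contDiff_fderiv_apply hv _).continuous_fderiv one_ne_zero).clm_apply continuous_const

lemma lap_congr (h : u =ᶠ[𝓝 x] v) : lap u x = lap v x := by
  refine Finset.sum_congr rfl fun i _ => ?_
  have hpartial : (fun y => fderiv ℝ u y (EuclideanSpace.single i 1)) =ᶠ[𝓝 x]
      fun y => fderiv ℝ v y (EuclideanSpace.single i 1) := by
    filter_upwards [h.fderiv (𝕜 := ℝ)] with y hy
    rw [hy]
  rw [hpartial.fderiv_eq]

lemma apply_eq_sum_inner_mul (T : EuclideanSpace ℝ (Fin n) →L[ℝ] ℝ)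
    (y : EuclideanSpace ℝ (Fin n)) :
    T y = ∑ i, ⟪y, EuclideanSpace.single i 1⟫ * T (EuclideanSpace.single i 1) := by
  conv_lhs => rw [← (EuclideanSpace.basisFun (Fin n) ℝ).sum_repr' y, map_sum]
  simp only [EuclideanSpace.basisFun_apply, map_smul, smul_eq_mul, real_inner_comm]

lemma hasDerivAt_kernelMean_paraboloidKernel (hv : ContDiff ℝ 2 v) (x : EuclideanSpace ℝ (Fin n))
    (r : ℝ) :
    HasDerivAt (kernelMean paraboloidKernel v x)
      (r / 4 * kernelMean (fun y => paraboloidKernel y ^ 2) (lap v) x r) r := by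
  let e (i : Fin n) : EuclideanSpace ℝ (Fin n) := EuclideanSpace.single i 1
  let g (i : Fin n) (y : EuclideanSpace ℝ (Fin n)) : ℝ := fderiv ℝ v (x + r • y) (e i)
  have hg (i : Fin n) : ContDiff ℝ 1 (g i) := (contDiff_fderiv_apply hv (e i)).comp (by fun_prop)
  have hgc (i : Fin n) := (hg i).continuous
  have (i : Fin n) := (hg i).continuous_fderiv one_ne_zero
  have hfderiv (i : Fin n) (y : EuclideanSpace ℝ (Fin n)) : fderiv ℝ (g i) y (e i) =
      r * fderiv ℝ (fun z => fderiv ℝ v z (e i)) (x + r • y) (e i) :=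
    fderiv_comp_add_smul_apply (fun z => fderiv ℝ v z (e i)) x y (e i) r
  have hkcont : Continuous (paraboloidKernel : EuclideanSpace ℝ (Fin n) → ℝ) :=
    lipschitzWith_paraboloidKernel.continuous
  have hkc : HasCompactSupport (paraboloidKernel : EuclideanSpace ℝ (Fin n) → ℝ) :=
    hasCompactSupport_of_eq_zero_of_one_le_norm fun y => paraboloidKernel_eq_zero
  have hint (i : Fin n) : Integrable fun y => paraboloidKernel y * ⟪y, e i⟫ * g i y :=
    Continuous.integrable_of_hasCompactSupport (by fun_prop) hkc.mul_right.mul_right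
  have hint_sq (i : Fin n) :
      Integrable fun y => paraboloidKernel y ^ 2 * fderiv ℝ (g i) y (e i) :=
    Continuous.integrable_of_hasCompactSupport (by fun_prop)
      (hkc.comp_left (zero_pow two_ne_zero)).mul_right
  refine (hasDerivAt_kernelMean hkcont (fun y => paraboloidKernel_eq_zero)
    (hv.of_le one_le_two) x r).congr_deriv ?_
  calc ∫ y, paraboloidKernel y * fderiv ℝ v (x + r • y) y
      = ∫ y, ∑ i, paraboloidKernel y * ⟪y, e i⟫ * g i y := by
        congr with y
        rw [apply_eq_sum_inner_mul, Finset.mul_sum]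
        simp only [mul_assoc, e, g]
    _ = ∑ i, ∫ y, paraboloidKernel y * ⟪y, e i⟫ * g i y := integral_finsetSum _ fun i _ => hint i
    _ = ∑ i, 1 / 4 * ∫ y, paraboloidKernel y ^ 2 * fderiv ℝ (g i) y (e i) := by
        refine Finset.sum_congr rfl fun i _ => ?_
        rw [integral_paraboloidKernel_sq_mul_fderiv (hg i) (e i)]
        ring
    _ = 1 / 4 * ∫ y, r * (paraboloidKernel y ^ 2 * lap v (x + r • y)) := by
        rw [← Finset.mul_sum, ← integral_finsetSum _ fun i _ => hint_sq i]
        congr with y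
        simp only [hfderiv, lap, Finset.mul_sum, e, mul_left_comm r]
    _ = r / 4 * kernelMean (fun y => paraboloidKernel y ^ 2) (lap v) x r := by
        rw [integral_const_mul, kernelMean]
        ring

end Laplacian
section InteriorEstimate

variable {u v : EuclideanSpace ℝ (Fin n) → ℝ} {x x' : EuclideanSpace ℝ (Fin n)}

lemma abs_kernelMean_sub_le_of_abs_lap_le (hv : ContDiff ℝ 2 v) {ρ M : ℝ} (hρ : 0 < ρ)
    (hM : ∀ z ∈ ball x ρ ∪ ball x' ρ, |lap v z| ≤ M) :
    |(kernelMean paraboloidKernel v x ρ - kernelMean paraboloidKernel v x' ρ) -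
        (kernelMean paraboloidKernel v x 0 - kernelMean paraboloidKernel v x' 0)| ≤
      2 * M * volume.real (ball (0 : EuclideanSpace ℝ (Fin n)) 1) * ‖x - x'‖ * ρ := by
  have hM0 : 0 ≤ M := (abs_nonneg _).trans (hM x (Or.inl (mem_ball_self hρ)))
  have hderiv (r : ℝ) := (hasDerivAt_kernelMean_paraboloidKernel hv x r).sub
    (hasDerivAt_kernelMean_paraboloidKernel hv x' r)
  have hbound : ∀ r ∈ Ico 0 ρ,
      ‖r / 4 * kernelMean (fun y => paraboloidKernel y ^ 2) (lap v) x r -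
          r / 4 * kernelMean (fun y => paraboloidKernel y ^ 2) (lap v) x' r‖ ≤
        2 * M * volume.real (ball (0 : EuclideanSpace ℝ (Fin n)) 1) * ‖x - x'‖ := by
    rintro r ⟨hr0, hrρ⟩
    rcases hr0.eq_or_lt with rfl | hr
    · simp only [zero_div, zero_mul, sub_self, norm_zero]
      positivity
    · have hsub : ball x r ∪ ball x' r ⊆ ball x ρ ∪ ball x' ρ :=
        union_subset_union (ball_subset_ball hrρ.le) (ball_subset_ball hrρ.le)
      have h := abs_kernelMean_sub_kernelMean_le_of_bound lipschitzWith_paraboloidKernel_sq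
        (fun y hy => by rw [paraboloidKernel_eq_zero hy, zero_pow two_ne_zero])
        (continuous_lap hv) hr fun z hz => hM z (hsub hz)
      rw [← mul_sub, norm_mul, Real.norm_of_nonneg (by positivity), Real.norm_eq_abs]
      calc r / 4 * _ ≤ r / 4 * _ := mul_le_mul_of_nonneg_left h (by positivity)
        _ = _ := by rw [NNReal.coe_ofNat]; field_simp
  simpa using norm_image_sub_le_of_norm_deriv_le_segment'
    (fun r _ => (hderiv r).hasDerivWithinAt) hbound ρ ⟨hρ.le, le_rfl⟩

lemma integral_paraboloidKernel_pos : 0 < ∫ y : EuclideanSpace ℝ (Fin n), paraboloidKernel y :=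
  lipschitzWith_paraboloidKernel.continuous.integral_pos_of_hasCompactSupport_nonneg_nonzero
    (hasCompactSupport_of_eq_zero_of_one_le_norm fun _ => paraboloidKernel_eq_zero)
    paraboloidKernel_nonneg (x := 0) (by simp [paraboloidKernel])

lemma integral_paraboloidKernel_mul_abs_sub_le (hv : ContDiff ℝ 2 v) {ρ M : ℝ} (hρ : 0 < ρ)
    (hM : ∀ z ∈ ball x ρ ∪ ball x' ρ, |lap v z| ≤ M) :
    (∫ y : EuclideanSpace ℝ (Fin n), paraboloidKernel y) * |v x - v x'| ≤
      (2 * M * volume.real (ball (0 : EuclideanSpace ℝ (Fin n)) 1) * ρ +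
        2 * (ρ ^ (n + 1))⁻¹ * ((∫ z in ball x ρ, |v z|) + ∫ z in ball x' ρ, |v z|)) *
        ‖x - x'‖ := by
  have hsmall := abs_kernelMean_sub_le_of_abs_lap_le hv hρ hM
  have hlarge := abs_kernelMean_sub_kernelMean_le lipschitzWith_paraboloidKernel
    (fun y => paraboloidKernel_eq_zero) hv.continuous x x' hρ
  rw [setIntegral_ball_comp_add_smul (fun z => |v z|) x hρ,
    setIntegral_ball_comp_add_smul (fun z => |v z|) x' hρ, ← mul_add, finrank_euclideanSpace_fin,
    NNReal.coe_ofNat] at hlarge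
  rw [kernelMean_zero, kernelMean_zero, ← mul_sub, abs_sub_comm] at hsmall
  set H := kernelMean paraboloidKernel v x ρ - kernelMean paraboloidKernel v x' ρ
  calc (∫ y : EuclideanSpace ℝ (Fin n), paraboloidKernel y) * |v x - v x'|
      = |(∫ y : EuclideanSpace ℝ (Fin n), paraboloidKernel y) * (v x - v x')| := by
        rw [abs_mul, abs_of_pos integral_paraboloidKernel_pos]
    _ ≤ |(∫ y, paraboloidKernel y) * (v x - v x') - H| + |H| :=
        sub_le_iff_le_add.1 (abs_sub_abs_le_abs_sub _ _)
    _ ≤ _ := add_le_add hsmall hlarge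
    _ = _ := by
        rw [pow_succ, mul_inv]
        ring

lemma exists_contDiff_eqOn_ball {E : Type*} [NormedAddCommGroup E] [NormedSpace ℝ E]
    [HasContDiffBump E] {G : Type*} [NormedAddCommGroup G] [NormedSpace ℝ G] {m : ℕ∞} {u : E → G}
    {x : E} {r R : ℝ} (hr : 0 < r) (hrR : r < R)
    (hu : ContDiffOn ℝ m u (ball x R)) :
    ∃ v : E → G, ContDiff ℝ m v ∧ EqOn v u (ball x r) := by
  let χ : ContDiffBump x := ⟨r, (r + R) / 2, hr, by linarith⟩
  refine ⟨fun z => χ z • u z, contDiff_iff_contDiffAt.2 fun z => ?_, fun z hz => ?_⟩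
  · by_cases hz : z ∈ ball x R
    · exact χ.contDiffAt.smul (hu.contDiffAt (isOpen_ball.mem_nhds hz))
    · have hz' : z ∈ (closedBall x ((r + R) / 2))ᶜ := by
        rw [mem_ball, not_lt] at hz
        rw [mem_compl_iff, mem_closedBall, not_le]
        linarith
      refine (contDiffAt_const (c := (0 : G))).congr_of_eventuallyEq ?_
      filter_upwards [isClosed_closedBall.isOpen_compl.mem_nhds hz'] with y hy
      rw [mem_compl_iff, mem_closedBall, not_le] at hy
      rw [χ.zero_of_le_dist hy.le, zero_smul]
  · simp only [χ.one_of_mem_closedBall (ball_subset_closedBall hz), one_smul]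

lemma integral_paraboloidKernel_mul_abs_sub_le_of_contDiffOn {R ρ M : ℝ}
    (hu : ContDiffOn ℝ 2 u (ball x R)) (hρ : 0 < ρ) (hx' : dist x' x + ρ < R)
    (hM : ∀ z ∈ ball x ρ ∪ ball x' ρ, |lap u z| ≤ M) :
    (∫ y : EuclideanSpace ℝ (Fin n), paraboloidKernel y) * |u x - u x'| ≤
      (2 * M * volume.real (ball (0 : EuclideanSpace ℝ (Fin n)) 1) * ρ +
        2 * (ρ ^ (n + 1))⁻¹ * ((∫ z in ball x ρ, |u z|) + ∫ z in ball x' ρ, |u z|)) *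
        ‖x - x'‖ := by
  have hball : ball x ρ ⊆ ball x (dist x' x + ρ) :=
    ball_subset_ball (le_add_of_nonneg_left dist_nonneg)
  have hball' : ball x' ρ ⊆ ball x (dist x' x + ρ) := ball_subset_ball' (add_comm _ _).le
  obtain ⟨v, hv, hvu⟩ := exists_contDiff_eqOn_ball (m := 2) (by positivity) hx' hu
  have hlap : ∀ z ∈ ball x ρ ∪ ball x' ρ, |lap v z| ≤ M := by
    intro z hz
    rw [lap_congr (hvu.eventuallyEq_of_mem (isOpen_ball.mem_nhds (union_subset hball hball' hz)))]
    exact hM z hz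
  have hintegral {p : EuclideanSpace ℝ (Fin n)} (hp : ball p ρ ⊆ ball x (dist x' x + ρ)) :
      ∫ z in ball p ρ, |v z| = ∫ z in ball p ρ, |u z| :=
    setIntegral_congr_fun measurableSet_ball fun z hz => congrArg abs (hvu (hp hz))
  have hmain := integral_paraboloidKernel_mul_abs_sub_le hv hρ hlap
  rwa [hvu (hball (mem_ball_self hρ)), hvu (hball' (mem_ball_self hρ)), hintegral hball,
    hintegral hball'] at hmain

theorem exists_abs_sub_le_of_abs_lap_le (n : ℕ) :
    ∃ C : ℝ, 0 ≤ C ∧ ∀ (u : EuclideanSpace ℝ (Fin n) → ℝ) (x x' : EuclideanSpace ℝ (Fin n))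
      (R M A : ℝ), 0 < R → ContDiffOn ℝ 2 u (ball x R) → (∀ z ∈ ball x R, |lap u z| ≤ M) →
      IntegrableOn u (ball x R) → ∫ z in ball x R, |u z| ≤ A * R ^ (n + 1) → dist x' x < R / 4 →
      |u x - u x'| ≤ C * (M * R + A) * ‖x - x'‖ := by
  set κ := ∫ y : EuclideanSpace ℝ (Fin n), paraboloidKernel y
  have hκ : 0 < κ := integral_paraboloidKernel_pos
  set V := volume.real (ball (0 : EuclideanSpace ℝ (Fin n)) 1)
  refine ⟨κ⁻¹ * (V + 2 ^ (n + 3)), by positivity,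
    fun u x x' R M A hR hu hM hint hA hx' => ?_⟩
  have hball : ball x (R / 2) ⊆ ball x R := ball_subset_ball (by linarith)
  have hball' : ball x' (R / 2) ⊆ ball x R := ball_subset_ball' (by linarith)
  have hintegral {s : Set (EuclideanSpace ℝ (Fin n))} (hs : s ⊆ ball x R) :
      ∫ z in s, |u z| ≤ A * R ^ (n + 1) :=
    (setIntegral_mono_set hint.abs (Eventually.of_forall fun z => abs_nonneg (u z))
      hs.eventuallyLE).trans hA
  have hmain := integral_paraboloidKernel_mul_abs_sub_le_of_contDiffOn hu (half_pos hR)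
    (by linarith) fun z hz => hM z (union_subset hball hball' hz)
  have hM0 : 0 ≤ M := (abs_nonneg _).trans (hM x (mem_ball_self hR))
  have hA0 : 0 ≤ A := by
    refine nonneg_of_mul_nonneg_left (le_trans ?_ hA) (pow_pos hR (n + 1))
    exact integral_nonneg fun z => abs_nonneg (u z)
  rw [mul_assoc, mul_assoc, le_inv_mul_iff₀ hκ, ← mul_assoc]
  refine hmain.trans (mul_le_mul_of_nonneg_right ?_ (norm_nonneg _))
  calc _ ≤ 2 * M * V * (R / 2) +
          2 * ((R / 2) ^ (n + 1))⁻¹ * (A * R ^ (n + 1) + A * R ^ (n + 1)) := by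
        gcongr
        · exact hintegral hball
        · exact hintegral hball'
    _ = V * (M * R) + 2 ^ (n + 3) * A := by
        rw [div_pow, inv_div]
        field_simp
        ring
    _ ≤ (V + 2 ^ (n + 3)) * (M * R + A) := by
        have : 0 ≤ V * A + 2 ^ (n + 3) * (M * R) := by positivity
        linarith

end InteriorEstimate

/-! ### Lipschitz bounds from local bounds on the positivity set -/

lemma sub_le_mul_of_eventually_nhdsGT {g : ℝ → ℝ} {a b c : ℝ} (hab : a ≤ b)
    (hg : ContinuousOn g (Icc a b))
    (hloc : ∀ t ∈ Ico a b, ∀ᶠ t' in 𝓝[>] t, g t - g t' ≤ c * (t' - t)) :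
    g a - g b ≤ c * (b - a) := by
  have hslope : ∀ t ∈ Ico a b, ∀ r, c < r → ∃ᶠ t' in 𝓝[>] t, slope (-g) t t' < r := by
    intro t ht r hr
    refine Eventually.frequently ?_
    filter_upwards [hloc t ht, self_mem_nhdsWithin] with t' hle htt'
    rw [slope_def_field, div_lt_iff₀ (sub_pos.2 htt')]
    have : c * (t' - t) < r * (t' - t) := mul_lt_mul_of_pos_right hr (sub_pos.2 htt')
    simp only [Pi.neg_apply]
    linarith
  have hline (t : ℝ) : HasDerivAt (fun t => -g a + c * (t - a)) c t := by
    simpa using (((hasDerivAt_id t).sub_const a).const_mul c).const_add (-g a)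
  have hle := image_le_of_liminf_slope_right_le_deriv_boundary hg.neg (by simp)
    (fun t _ => (hline t).continuousAt.continuousWithinAt)
    (fun t _ => (hline t).hasDerivWithinAt) hslope (right_mem_Icc.2 hab)
  rw [Pi.neg_apply] at hle
  linarith

theorem lipschitzOnWith_of_eventually_abs_sub_le_of_pos {E : Type*} [NormedAddCommGroup E]
    [NormedSpace ℝ E] {s : Set E} (hs : Convex ℝ s) {u : E → ℝ} (hu : ContinuousOn u s)
    (hu0 : ∀ x ∈ s, 0 ≤ u x) {M : ℝ≥0}
    (hloc : ∀ x ∈ s, 0 < u x → ∀ᶠ x' in 𝓝[s] x, |u x - u x'| ≤ M * ‖x - x'‖) :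
    LipschitzOnWith M u s := by
  refine LipschitzOnWith.of_le_add_mul M fun x hx y hy => ?_
  set γ : ℝ → E := fun t => AffineMap.lineMap (k := ℝ) x y t with hγ
  have hγc : Continuous γ := AffineMap.lineMap_continuous
  have hγs : MapsTo γ (Icc 0 1) s := fun t ht => hs.lineMap_mem hx hy ht
  have hslope : ∀ t ∈ Ico (0 : ℝ) 1,
      ∀ᶠ t' in 𝓝[>] t, (u ∘ γ) t - (u ∘ γ) t' ≤ M * dist x y * (t' - t) := by
    intro t ht
    have htendsto : Tendsto γ (𝓝[>] t) (𝓝[s] γ t) := by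
      refine tendsto_nhdsWithin_iff.2 ⟨hγc.continuousAt.mono_left nhdsWithin_le_nhds, ?_⟩
      filter_upwards [Ioo_mem_nhdsGT ht.2] with t' ht'
      exact hγs ⟨ht.1.trans ht'.1.le, ht'.2.le⟩
    have hts : γ t ∈ s := hγs (Ico_subset_Icc_self ht)
    rcases (hu0 _ hts).eq_or_lt with hzero | hpos
    · filter_upwards [htendsto.eventually self_mem_nhdsWithin, self_mem_nhdsWithin]
        with t' ht's htt'
      have : 0 ≤ M * dist x y * (t' - t) :=
        mul_nonneg (by positivity) (sub_nonneg.2 (le_of_lt htt'))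
      simp only [Function.comp_apply, ← hzero]
      linarith [hu0 _ ht's]
    · filter_upwards [htendsto.eventually (hloc _ hts hpos), self_mem_nhdsWithin] with t' hle htt'
      refine (le_abs_self _).trans (hle.trans_eq ?_)
      rw [← dist_eq_norm, hγ, dist_lineMap_lineMap, dist_comm t, Real.dist_eq,
        abs_of_pos (sub_pos.2 htt')]
      ring
  have hle := sub_le_mul_of_eventually_nhdsGT zero_le_one (hu.comp hγc.continuousOn hγs) hslope
  simp only [Function.comp_apply, hγ, AffineMap.lineMap_apply_zero, AffineMap.lineMap_apply_one,
    sub_zero, mul_one] at hle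
  linarith

/-! ### Growth at the free boundary -/

lemma exists_ball_subset_setIntegral_le {E : Type*} [NormedAddCommGroup E] [NormedSpace ℝ E]
    [FiniteDimensional ℝ E] [MeasurableSpace E] [BorelSpace E] {μ : Measure E} {U : Set E}
    (hU : IsOpen U) (hU_univ : U ≠ univ) {u : E → ℝ} {c : E} {r s B : ℝ} {N : ℕ} (hrs : r < s)
    (hint : IntegrableOn u (ball c s) μ) (hu0 : ∀ y ∈ ball c s, 0 ≤ u y) (hB : 0 ≤ B)
    (hgrowth : ∀ z ∈ frontier U, ∀ ρ, 0 < ρ → ball z ρ ⊆ ball c s →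
      ∫ y in ball z ρ, u y ∂μ ≤ B * ρ ^ N) :
    ∃ A, ∀ x ∈ ball c r ∩ U, ∃ R, 0 < R ∧ R ≤ s - r ∧ ball x R ⊆ U ∩ ball c s ∧
      ∫ y in ball x R, u y ∂μ ≤ A * R ^ N := by
  have hmono {t t' : Set E} (ht' : MeasurableSet t') (htt' : t ⊆ t') (hsub : t' ⊆ ball c s) :
      ∫ y in t, u y ∂μ ≤ ∫ y in t', u y ∂μ := by
    refine setIntegral_mono_set (hint.mono_set hsub) ?_ htt'.eventuallyLE
    filter_upwards [ae_restrict_mem ht'] with y hy using hu0 y (hsub hy)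
  set ε := (s - r) / 3 with hε
  have hε0 : 0 < ε := by rw [hε]; linarith
  set J := ∫ y in ball c s, u y ∂μ
  have hJ : 0 ≤ J := setIntegral_nonneg measurableSet_ball hu0
  refine ⟨J / ε ^ N + B * 2 ^ N, fun x ⟨hxr, hxU⟩ => ?_⟩
  rw [mem_ball] at hxr
  obtain ⟨z, hz, hdist⟩ := exists_mem_frontier_infDist_compl_eq_dist hxU hU_univ
  have hball : ball x (dist x z) ⊆ U := hdist ▸ ball_infDist_compl_subset
  rcases le_or_gt ε (dist x z) with hfar | hnear
  · have hxs : ball x ε ⊆ ball c s := ball_subset_ball' (by linarith)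
    refine ⟨ε, hε0, by linarith, subset_inter ((ball_subset_ball hfar).trans hball) hxs, ?_⟩
    refine (hmono measurableSet_ball hxs subset_rfl).trans ?_
    rw [add_mul, div_mul_cancel₀ _ (by positivity)]
    exact le_add_of_nonneg_right (by positivity)
  · have hd : 0 < dist x z := dist_pos.2 fun hxz => (hU.frontier_eq ▸ hz).2 (hxz ▸ hxU)
    have hzs : ball z (2 * dist x z) ⊆ ball c s := ball_subset_ball' (by
      linarith [dist_triangle z x c, dist_comm z x])
    have hxz : ball x (dist x z) ⊆ ball z (2 * dist x z) := ball_subset_ball' (by linarith)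
    refine ⟨dist x z, hd, by linarith, subset_inter hball (hxz.trans hzs), ?_⟩
    refine (hmono measurableSet_ball hxz hzs).trans ((hgrowth z hz _ (by positivity) hzs).trans ?_)
    rw [add_mul, mul_pow, mul_assoc]
    exact le_add_of_nonneg_left (by positivity)

lemma isOpen_posSet {u : EuclideanSpace ℝ (Fin n) → ℝ} (hu : ContinuousOn u (ball 0 1)) :
    IsOpen (posSet u) :=
  hu.isOpen_inter_preimage isOpen_ball isOpen_Ioi

lemma posSet_ne_univ [Nontrivial (EuclideanSpace ℝ (Fin n))]
    (u : EuclideanSpace ℝ (Fin n) → ℝ) : posSet u ≠ univ := by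
  obtain ⟨w, hw⟩ := NormedSpace.exists_lt_norm ℝ (EuclideanSpace ℝ (Fin n)) 1
  exact fun h => hw.not_gt (mem_ball_zero_iff.1 (h ▸ mem_univ w : w ∈ posSet u).1)

/-! ### Local Lipschitz continuity -/

lemma exists_forall_eventually_abs_sub_le [Nontrivial (EuclideanSpace ℝ (Fin n))]
    {u : EuclideanSpace ℝ (Fin n) → ℝ} {r s M C : ℝ} (hrs : r < s) (hs : s < 1)
    (hu : ContinuousOn u (ball 0 1))
    (hu0 : ∀ x ∈ ball (0 : EuclideanSpace ℝ (Fin n)) 1, 0 ≤ u x)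
    (hc2 : ContDiffOn ℝ 2 u (posSet u)) (hM : ∀ x ∈ posSet u ∩ ball 0 s, |lap u x| ≤ M)
    (hC : ∀ x ρ, 0 < ρ → ball x ρ ⊆ ball 0 s → x ∈ frontier (posSet u) →
      (1 / ρ) * ⨍ y in sphere x ρ, u y ∂(μH[(n - 1 : ℝ)]) ≤ C) :
    ∃ L : ℝ≥0, ∀ x ∈ ball 0 r, 0 < u x → ∀ᶠ x' in 𝓝 x, |u x - u x'| ≤ L * ‖x - x'‖ := by
  have hs1 : ball (0 : EuclideanSpace ℝ (Fin n)) s ⊆ ball 0 1 := ball_subset_ball hs.le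
  have hint : IntegrableOn u (ball 0 s) :=
    ((hu.mono (closedBall_subset_ball hs)).integrableOn_compact
      (isCompact_closedBall 0 s)).mono_set ball_subset_closedBall
  obtain ⟨K, hK0, hK⟩ := exists_setIntegral_ball_le_of_setAverage_sphere_le
    (volume : Measure (EuclideanSpace ℝ (Fin n)))
  rw [finrank_euclideanSpace_fin] at hK
  obtain ⟨A, hA⟩ := exists_ball_subset_setIntegral_le (isOpen_posSet hu) (posSet_ne_univ u) hrs
    hint (fun y hy => hu0 y (hs1 hy)) (by positivity : 0 ≤ K * |C|) fun z hz ρ hρ hzρ =>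
      hK u z ρ C hρ (hu.mono (hzρ.trans hs1)) (fun y hy => hu0 y (hs1 (hzρ hy)))
        fun t ht htρ => hC z t ht ((ball_subset_ball htρ.le).trans hzρ) hz
  obtain ⟨C', hC'0, hC'⟩ := exists_abs_sub_le_of_abs_lap_le n
  refine ⟨(C' * (|M| * (s - r) + |A|)).toNNReal, fun x hx hux => ?_⟩
  obtain ⟨R, hR, hRsr, hsub, hRA⟩ := hA x ⟨hx, ball_subset_ball (hrs.trans hs).le hx, hux⟩
  rw [subset_inter_iff] at hsub
  filter_upwards [ball_mem_nhds x (by positivity : 0 < R / 4)] with x' hx'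
  have habs : ∫ z in ball x R, |u z| = ∫ z in ball x R, u z :=
    setIntegral_congr_fun measurableSet_ball fun z hz => abs_of_pos (hsub.1 hz).2
  refine (hC' u x x' R M A hR (hc2.mono hsub.1) (fun z hz => hM z ⟨hsub.1 hz, hsub.2 hz⟩)
    (hint.mono_set hsub.2) (habs.trans_le hRA) hx').trans ?_
  refine mul_le_mul_of_nonneg_right ((mul_le_mul_of_nonneg_left ?_ hC'0).trans
    (Real.le_coe_toNNReal _)) (norm_nonneg _)
  gcongr
  · exact le_abs_self M
  · exact le_abs_self A

theorem weak_solution_locally_lipschitz_general (u : EuclideanSpace ℝ (Fin n) → ℝ)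
    (hu : ContinuousOn u (ball 0 1))
    (hu0 : ∀ x ∈ ball (0 : EuclideanSpace ℝ (Fin n)) 1, 0 ≤ u x)
    (hc2 : ContDiffOn ℝ 2 u (posSet u))
    (hlap : ∀ K ⊆ ball (0 : EuclideanSpace ℝ (Fin n)) 1, IsCompact K →
      ∃ M, ∀ x ∈ posSet u ∩ K, |lap u x| ≤ M)
    (hub : ∀ D : Set (EuclideanSpace ℝ (Fin n)), IsOpen D →
      closure D ⊆ ball (0 : EuclideanSpace ℝ (Fin n)) 1 →
      ∃ C : ℝ, ∀ x r, 0 < r → ball x r ⊆ D → x ∈ frontier (posSet u) →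
        (1 / r) * ⨍ y in sphere x r, u y ∂(μH[(n - 1 : ℝ)]) ≤ C) :
    ∀ δ : ℝ, 0 < δ → δ < 1 →
      ∃ C : ℝ≥0, LipschitzOnWith C u (ball (0 : EuclideanSpace ℝ (Fin n)) (1 - δ)) := by
  intro δ hδ _
  rcases subsingleton_or_nontrivial (EuclideanSpace ℝ (Fin n)) with _ | _
  · exact ⟨0, fun x _ y _ => by rw [Subsingleton.elim x y, edist_self]; exact zero_le⟩
  have hclosed : closedBall (0 : EuclideanSpace ℝ (Fin n)) (1 - δ / 2) ⊆ ball 0 1 :=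
    closedBall_subset_ball (by linarith)
  have hsub : ball (0 : EuclideanSpace ℝ (Fin n)) (1 - δ) ⊆ ball 0 1 :=
    ball_subset_ball (by linarith)
  obtain ⟨M, hM⟩ := hlap _ hclosed (isCompact_closedBall 0 _)
  obtain ⟨C, hC⟩ := hub (ball 0 (1 - δ / 2)) isOpen_ball
    (closure_ball_subset_closedBall.trans hclosed)
  obtain ⟨L, hL⟩ := exists_forall_eventually_abs_sub_le (r := 1 - δ) (by linarith) (by linarith)
    hu hu0 hc2 (fun x hx => hM x ⟨hx.1, ball_subset_closedBall hx.2⟩) hC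
  exact ⟨L, lipschitzOnWith_of_eventually_abs_sub_le_of_pos (convex_ball 0 _) (hu.mono hsub)
    (fun x hx => hu0 x (hsub hx)) fun x hx hux => nhdsWithin_le_nhds (hL x hx hux)⟩

/-- **Proposition 2.6.** A continuous nonnegative function `u` on `B₁` with `Δu = -f` on `{u > 0}`
satisfying the upper bound in condition (ii) of the definition of weak solution is
locally Lipschitz in `B₁`. -/
theorem weak_solution_locally_lipschitz
    (hn : 2 ≤ n) (f u : EuclideanSpace ℝ (Fin n) → ℝ)
    (hf : ContDiffOn ℝ (⊤ : ℕ∞) f (ball 0 1))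
    (hu : ContinuousOn u (ball 0 1))
    (hu0 : ∀ x ∈ ball (0 : EuclideanSpace ℝ (Fin n)) 1, 0 ≤ u x)
    (hc2 : ContDiffOn ℝ 2 u (posSet u))
    (heqn : ∀ x ∈ posSet u, lap u x = - f x)
    (hub : ∀ D : Set (EuclideanSpace ℝ (Fin n)), IsOpen D →
      closure D ⊆ ball (0 : EuclideanSpace ℝ (Fin n)) 1 →
      ∃ C : ℝ, ∀ x r, 0 < r → ball x r ⊆ D → x ∈ frontier (posSet u) →
        (1/r) * ⨍ y in sphere x r, u y ∂(μH[(n-1:ℝ)]) ≤ C) :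
    ∀ δ : ℝ, 0 < δ → δ < 1 →
      ∃ C : ℝ≥0, LipschitzOnWith C u (ball (0 : EuclideanSpace ℝ (Fin n)) (1 - δ)) := by
  refine weak_solution_locally_lipschitz_general u hu hu0 hc2 (fun K hK hKc => ?_) hub
  obtain ⟨M, hM⟩ := hKc.exists_bound_of_continuousOn (hf.continuousOn.mono hK)
  exact ⟨M, fun x hx => by rw [heqn x hx.1, abs_neg]; exact hM x hx.2⟩
end
end

section
/- Let n ≥ 2 and f ∈ C^∞(B₁), and let Q₀ > 0. There exist constants δ₀, κ₀, C₁, C₂ > 0, depending only on n, ‖f‖_{L^∞(B₁)} and Q₀, such that the following holds for all 0 < δ ≤ δ₀ and 0 < κ ≤ κ₀. Let u : B₁ → ℝ be continuous and nonnegative, C² on the open set {u > 0} with Δu = −f there, let x₀ ∈ B₁, let ν ∈ ℝⁿ be a unit vector, and let r > 0 be such that B_{r/κ}(x₀) ⊆ B₁ and |u(x) − Q₀ ((x − x₀)·ν)₊| ≤ δ r for all x ∈ B_{r/κ}(x₀). Then |∇u(x) − Q₀ ν| ≤ C₁ Q₀ (δ + κ) for every x ∈ B_{r/(2κ)}(x₀)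 with u(x) = r, and μH^{n−1}({x ∈ B_{r/(2κ)}(x₀) : u(x) = r}) ≤ C₂ (r/κ)^{n−1}. -/
open MeasureTheory Metric Set Filter
open scoped ENNReal RealInnerProductSpace Topology NNReal

noncomputable section

variable {n : ℕ}

/-!
The heart is an interior gradient estimate obtained from the maximum principle alone. To bound
`∂_v w (p)`, antisymmetrise: with `R` the reflection in the hyperplane through `p` orthogonal to
`v`, the function `w - w ∘ R` vanishes on that hyperplane, so an explicit quadratic barrier on the
half-ball bounds its growth there.

Flatness puts the points of `{u = r}` at height at least about `r / Q₀` above the hyperplane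
`(x - x₀) · ν = 0`, where `u > 0` on a ball of radius comparable to `r` and the half-plane solution
is affine. The gradient estimate for `u` minus this affine function gives an error
`O(δ r / r + r) = O(δ + κ)`, since `r ≤ κ`. For small `δ` and `κ` the gradient is then close to
`Q₀ ν` on a convex cap containing the level set, so the projection along `ν` is bi-Lipschitz on
the level set, and its image is contained in an `(n - 1)`-dimensional ball.
-/

open Module InnerProductSpace Laplacian

section SecondDerivative

variable {E F : Type*} [NormedAddCommGroup E] [NormedSpace ℝ E]
  [NormedAddCommGroup F] [NormedSpace ℝ F] {x : E}

lemma iteratedFDeriv_two_apply_self {f : E → F} (hf : ContDiffAt ℝ 2 f x) (v : E) :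
    iteratedFDeriv ℝ 2 f x ![v, v] = deriv (deriv fun s : ℝ ↦ f (x + s • v)) 0 := by
  have hline (s : ℝ) : HasDerivAt (fun s : ℝ ↦ x + s • v) v s := by
    simpa using ((hasDerivAt_id s).smul_const v).const_add x
  have hlim : Tendsto (fun s : ℝ ↦ x + s • v) (𝓝 0) (𝓝 x) := by
    simpa using (hline 0).continuousAt.tendsto
  have hfirst : deriv (fun s : ℝ ↦ f (x + s • v)) =ᶠ[𝓝 0] fun s ↦ fderiv ℝ f (x + s • v) v := by
    filter_upwards [hlim.eventually (hf.eventually (by simp))] with s hs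
    exact ((hs.differentiableAt (by simp)).hasFDerivAt.comp_hasDerivAt s (hline s)).deriv
  have hsecond : HasFDerivAt (fderiv ℝ f) (fderiv ℝ (fderiv ℝ f) x) (x + (0 : ℝ) • v) := by
    simpa using ((hf.fderiv_right (m := 1) (by norm_num)).differentiableAt (by simp)).hasFDerivAt
  have happly : HasDerivAt (fun s : ℝ ↦ fderiv ℝ f (x + s • v) v) (fderiv ℝ (fderiv ℝ f) x v v) 0 :=
    (ContinuousLinearMap.apply ℝ F v).hasFDerivAt.comp_hasDerivAt 0
      (hsecond.comp_hasDerivAt 0 (hline 0))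
  rw [hfirst.deriv_eq, happly.deriv, iteratedFDeriv_two_apply]
  rfl

lemma iteratedFDeriv_two_apply_self_of_quadratic {f : E → ℝ} (hf : ContDiffAt ℝ 2 f x) {v : E}
    {a b c : ℝ} (h : ∀ s : ℝ, f (x + s • v) = a + b * s + c * s ^ 2) :
    iteratedFDeriv ℝ 2 f x ![v, v] = 2 * c := by
  have hderiv : deriv (fun s : ℝ ↦ a + b * s + c * s ^ 2) = fun s ↦ b + 2 * c * s := by
    funext s
    have hs := hasDerivAt_id' s
    refine ((((hs.const_mul b).const_add a).add ((hs.pow 2).const_mul c)).congr_deriv ?_).deriv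
    norm_num
    ring
  simp_rw [iteratedFDeriv_two_apply_self hf, h, hderiv]
  simp

lemma deriv_deriv_nonpos_of_isLocalMax {f : ℝ → ℝ} {a : ℝ} (hf : ContinuousAt f a)
    (hmax : IsLocalMax f a) : deriv (deriv f) a ≤ 0 := by
  by_contra! hpos
  have hmin : IsLocalMin f a := isLocalMin_of_deriv_deriv_pos hpos hmax.deriv_eq_zero hf
  have hconst : f =ᶠ[𝓝 a] fun _ ↦ f a := by
    filter_upwards [hmax, hmin] with s h₁ h₂ using le_antisymm h₁ h₂
  exact hpos.ne' (by simpa using hconst.deriv.deriv_eq)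

end SecondDerivative

section Laplacian

variable {E : Type*} [NormedAddCommGroup E] [InnerProductSpace ℝ E]

lemma contDiff_inner_sub_left {k : WithTop ℕ∞} (p v : E) : ContDiff ℝ k fun y ↦ ⟪y - p, v⟫ :=
  (contDiff_id.sub contDiff_const).inner ℝ contDiff_const

lemma contDiff_norm_sub_sq {k : WithTop ℕ∞} (p : E) : ContDiff ℝ k fun y ↦ ‖y - p‖ ^ 2 :=
  (contDiff_id.sub contDiff_const).norm_sq ℝ

variable [FiniteDimensional ℝ E]

lemma lap_eq_laplacian {u : EuclideanSpace ℝ (Fin n) → ℝ} {x : EuclideanSpace ℝ (Fin n)}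
    (hu : ContDiffAt ℝ 2 u x) : lap u x = Δ u x := by
  have hdu : DifferentiableAt ℝ (fderiv ℝ u) x :=
    (hu.fderiv_right (m := 1) (by norm_num)).differentiableAt (by simp)
  simp [lap, laplacian_eq_iteratedFDeriv_orthonormalBasis u (EuclideanSpace.basisFun (Fin n) ℝ),
    iteratedFDeriv_two_apply, fderiv_clm_apply hdu (differentiableAt_const _)]

lemma laplacian_comp_affineIsometryEquiv {f : E → ℝ} (e : E ≃ᵃⁱ[ℝ] E) {x : E}
    (hf : ContDiffAt ℝ 2 f (e x)) : Δ (fun y ↦ f (e y)) x = Δ f (e x) := by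
  let b := stdOrthonormalBasis ℝ E
  let b' := b.map e.linearIsometryEquiv
  have hline (i) (s : ℝ) : f (e (x + s • b i)) = f (e x + s • b' i) := by
    rw [add_comm x, ← vadd_eq_add, e.map_vadd, vadd_eq_add, add_comm, map_smul]
    simp [b']
  have hcomp : ContDiffAt ℝ 2 (fun y ↦ f (e y)) x :=
    hf.comp x e.toContinuousAffineEquiv.toContinuousAffineMap.contDiff.contDiffAt
  rw [laplacian_eq_iteratedFDeriv_orthonormalBasis _ b,
    laplacian_eq_iteratedFDeriv_orthonormalBasis _ b']
  simp only [iteratedFDeriv_two_apply_self hf,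
    iteratedFDeriv_two_apply_self hcomp, hline]

lemma laplacian_eq_of_quadratic {ι : Type*} [Fintype ι] (b : OrthonormalBasis ι ℝ E) {f : E → ℝ}
    {x : E} (hf : ContDiffAt ℝ 2 f x) {a₀ a₁ a₂ : ι → ℝ}
    (h : ∀ i, ∀ s : ℝ, f (x + s • b i) = a₀ i + a₁ i * s + a₂ i * s ^ 2) :
    Δ f x = 2 * ∑ i, a₂ i := by
  rw [laplacian_eq_iteratedFDeriv_orthonormalBasis _ b, Finset.mul_sum]
  exact Finset.sum_congr rfl fun i _ ↦ iteratedFDeriv_two_apply_self_of_quadratic hf (h i)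

lemma laplacian_inner_sub_left (p v x : E) : Δ (fun y ↦ ⟪y - p, v⟫) x = 0 := by
  let b := stdOrthonormalBasis ℝ E
  have hline (i) (s : ℝ) :
      ⟪x + s • b i - p, v⟫ = ⟪x - p, v⟫ + ⟪b i, v⟫ * s + 0 * s ^ 2 := by
    rw [add_sub_right_comm, inner_add_left, real_inner_smul_left]
    ring
  simpa using laplacian_eq_of_quadratic b (contDiff_inner_sub_left p v).contDiffAt hline

lemma laplacian_norm_sub_sq (p x : E) : Δ (fun y ↦ ‖y - p‖ ^ 2) x = 2 * finrank ℝ E := by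
  let b := stdOrthonormalBasis ℝ E
  have hline (i) (s : ℝ) :
      ‖x + s • b i - p‖ ^ 2 = ‖x - p‖ ^ 2 + 2 * ⟪x - p, b i⟫ * s + 1 * s ^ 2 := by
    rw [add_sub_right_comm, norm_add_sq_real, real_inner_smul_right, norm_smul, b.norm_eq_one,
      mul_one, Real.norm_eq_abs, sq_abs]
    ring
  simpa using laplacian_eq_of_quadratic b (contDiff_norm_sub_sq p).contDiffAt hline

lemma laplacian_nonpos_of_isLocalMax {f : E → ℝ} {x : E} (hf : ContDiffAt ℝ 2 f x)
    (hmax : IsLocalMax f x) : Δ f x ≤ 0 := by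
  rw [laplacian_eq_iteratedFDeriv_stdOrthonormalBasis]
  refine Finset.sum_nonpos fun i _ ↦ ?_
  rw [iteratedFDeriv_two_apply_self hf]
  set v := stdOrthonormalBasis ℝ E i
  have hline : ContinuousAt (fun s : ℝ ↦ x + s • v) 0 := by fun_prop
  have hx : x + (0 : ℝ) • v = x := by simp
  refine deriv_deriv_nonpos_of_isLocalMax
    (ContinuousAt.comp (g := f) (by rw [hx]; exact hf.continuousAt) hline) ?_
  exact IsLocalMax.comp_continuous (g := fun s : ℝ ↦ x + s • v) (by rwa [hx]) hline

end Laplacian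

section MaximumPrinciple

variable {E : Type*} [NormedAddCommGroup E] [InnerProductSpace ℝ E] [FiniteDimensional ℝ E]
  {K : Set E} {g : E → ℝ} {c : ℝ}

lemma le_of_laplacian_pos (hK : IsCompact K) (hgc : ContinuousOn g K)
    (hg : ∀ x ∈ interior K, ContDiffAt ℝ 2 g x) (hΔ : ∀ x ∈ interior K, 0 < Δ g x)
    (hbd : ∀ x ∈ frontier K, g x ≤ c) {x : E} (hx : x ∈ K) : g x ≤ c := by
  obtain ⟨q, hqK, hq⟩ := hK.exists_isMaxOn ⟨x, hx⟩ hgc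
  have hqint : q ∉ interior K := fun hqi ↦ (hΔ q hqi).not_ge <|
    laplacian_nonpos_of_isLocalMax (hg q hqi) (hq.isLocalMax (mem_interior_iff_mem_nhds.1 hqi))
  exact (hq hx).trans (hbd q ⟨subset_closure hqK, hqint⟩)

/- Adding `ε ‖x‖²` makes the Laplacian strictly positive; then `ε → 0`. -/
theorem le_of_laplacian_nonneg [Nontrivial E] (hK : IsCompact K) (hgc : ContinuousOn g K)
    (hg : ∀ x ∈ interior K, ContDiffAt ℝ 2 g x) (hΔ : ∀ x ∈ interior K, 0 ≤ Δ g x)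
    (hbd : ∀ x ∈ frontier K, g x ≤ c) {x : E} (hx : x ∈ K) : g x ≤ c := by
  obtain ⟨r, hr⟩ := hK.isBounded.exists_norm_le
  have hnorm (y : E) : ContDiffAt ℝ 2 (fun y : E ↦ ‖y - 0‖ ^ 2) y :=
    (contDiff_norm_sub_sq 0).contDiffAt
  have hperturbed (ε : ℝ) (hε : 0 < ε) : g x ≤ c + ε * r ^ 2 := by
    have hle : (g + ε • fun y : E ↦ ‖y - 0‖ ^ 2) x ≤ c + ε * r ^ 2 := by
      refine le_of_laplacian_pos hK (hgc.add (by fun_prop))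
        (fun y hy ↦ (hg y hy).add ((hnorm y).const_smul ε)) (fun y hy ↦ ?_) (fun y hy ↦ ?_) hx
      · have hdim : (0 : ℝ) < finrank ℝ E := by exact_mod_cast finrank_pos
        have hsmul : Δ (fun y : E ↦ ε • ‖y - 0‖ ^ 2) y = ε * (2 * finrank ℝ E) := by
          rw [← laplacian_norm_sub_sq 0 y]
          exact laplacian_smul ε (hnorm y)
        rw [(hg y hy).laplacian_add ((hnorm y).const_smul ε), hsmul]
        have := hΔ y hy
        positivity
      · have := hr y (hK.isClosed.frontier_subset hy)
        simp only [Pi.add_apply, sub_zero, smul_eq_mul]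
        gcongr
        exact hbd y hy
    refine le_trans ?_ hle
    simp only [Pi.add_apply, Pi.smul_apply, smul_eq_mul, le_add_iff_nonneg_right]
    positivity
  have hlim : Tendsto (fun ε : ℝ ↦ c + ε * r ^ 2) (𝓝[>] 0) (𝓝 c) := by
    have : Continuous fun ε : ℝ ↦ c + ε * r ^ 2 := by fun_prop
    simpa using this.continuousWithinAt.tendsto (x := (0 : ℝ)) (s := Ioi 0)
  exact ge_of_tendsto hlim (eventually_mem_nhdsWithin.mono hperturbed)

end MaximumPrinciple

section BallCap

variable {E : Type*} [NormedAddCommGroup E] [InnerProductSpace ℝ E] {p v : E} {ρ t : ℝ} {x : E}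

/-- The part of the closed ball of radius `ρ` about `p` at height at least `t` above `p` in the
direction `v`; for `t = 0` it is a closed half-ball. -/
def ballCap (p v : E) (ρ t : ℝ) : Set E := closedBall p ρ ∩ {x | t ≤ ⟪x - p, v⟫}

lemma mem_ballCap : x ∈ ballCap p v ρ t ↔ ‖x - p‖ ≤ ρ ∧ t ≤ ⟪x - p, v⟫ := by
  rw [← mem_closedBall_iff_norm]
  rfl

lemma convex_ballCap : Convex ℝ (ballCap p v ρ t) := by
  refine (convex_closedBall p ρ).inter fun x hx y hy a b ha hb hab ↦ ?_
  have hcomb : a • x + b • y - p = a • (x - p) + b • (y - p) := by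
    rw [smul_sub, smul_sub, sub_add_sub_comm, ← add_smul, hab, one_smul]
  simp only [mem_ofPred_eq, hcomb, inner_add_left, real_inner_smul_left] at hx hy ⊢
  calc t = a * t + b * t := by rw [← add_mul, hab, one_mul]
    _ ≤ _ := by gcongr

lemma isCompact_ballCap [FiniteDimensional ℝ E] : IsCompact (ballCap p v ρ t) :=
  (isCompact_closedBall p ρ).inter_right (isClosed_le (by fun_prop) (by fun_prop))

lemma interior_ballCap_subset (hρ : ρ ≠ 0) : interior (ballCap p v ρ t) ⊆ ball p ρ :=
  (interior_mono inter_subset_left).trans (interior_closedBall p hρ).subset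

lemma norm_eq_or_inner_eq_of_mem_frontier_ballCap (hρ : ρ ≠ 0)
    (hx : x ∈ frontier (ballCap p v ρ t)) : ‖x - p‖ = ρ ∨ ⟪x - p, v⟫ = t := by
  rcases frontier_inter_subset _ _ hx with ⟨hball, -⟩ | ⟨-, hplane⟩
  · rw [frontier_closedBall p hρ] at hball
    exact .inl (mem_sphere_iff_norm.1 hball)
  · exact .inr (frontier_le_subset_eq (by fun_prop) (by fun_prop) hplane).symm

lemma closedBall_subset_ballCap (hv : ‖v‖ = 1) {s : ℝ} (hx : x ∈ ballCap p v ρ t) :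
    closedBall x s ⊆ ballCap p v (ρ + s) (t - s) := by
  intro y hy
  rw [mem_closedBall_iff_norm] at hy
  rw [mem_ballCap] at hx ⊢
  have hsplit : y - p = (y - x) + (x - p) := by abel
  constructor
  · calc ‖y - p‖ ≤ ‖y - x‖ + ‖x - p‖ := hsplit ▸ norm_add_le _ _
      _ ≤ ρ + s := by linarith
  · have habs := abs_real_inner_le_norm (y - x) v
    rw [hv, mul_one] at habs
    rw [hsplit, inner_add_left]
    linarith [neg_le_of_abs_le habs]

end BallCap

section Reflection

variable {E : Type*} [NormedAddCommGroup E] [InnerProductSpace ℝ E] [FiniteDimensional ℝ E]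
  {p v x : E}

lemma reflection_orthogonal_eq_self (hx : ⟪x - p, v⟫ = 0) :
    EuclideanGeometry.reflection (.mk' p (ℝ ∙ v)ᗮ) x = x := by
  rw [EuclideanGeometry.reflection_eq_self_iff, AffineSubspace.mem_mk',
    Submodule.mem_orthogonal_singleton_iff_inner_left]
  exact hx

lemma reflection_orthogonal_add_smul (s : ℝ) :
    EuclideanGeometry.reflection (.mk' p (ℝ ∙ v)ᗮ) (p + s • v) = p - s • v := by
  have hsv : s • v ∈ (AffineSubspace.mk' p (ℝ ∙ v)ᗮ).directionᗮ := by
    rw [AffineSubspace.direction_mk', Submodule.orthogonal_orthogonal]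
    exact Submodule.smul_mem _ s (Submodule.mem_span_singleton_self v)
  rw [add_comm, sub_eq_neg_add]
  exact EuclideanGeometry.reflection_orthogonal_vadd (AffineSubspace.self_mem_mk' _ _) hsv

end Reflection

section InteriorGradientEstimate

variable {E : Type*} [NormedAddCommGroup E] [InnerProductSpace ℝ E]
  {p v : E} {ρ S N : ℝ}

/-- The barrier on the half-ball `ballCap p v ρ 0`: its Laplacian is `-N`, it is nonnegative on the
flat part of the boundary and at least `S` on the spherical part, and it vanishes at `p`. -/
def halfBallBarrier (p v : E) (ρ S N : ℝ) (x : E) : ℝ :=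
  S / ρ ^ 2 * ‖x - p‖ ^ 2 +
    (finrank ℝ E * S / ρ ^ 2 + N / 2) * (⟪x - p, v⟫ * (ρ - ⟪x - p, v⟫))

lemma contDiff_halfBallBarrier {k : WithTop ℕ∞} : ContDiff ℝ k (halfBallBarrier p v ρ S N) :=
  (contDiff_const.mul (contDiff_norm_sub_sq p)).add (contDiff_const.mul
    ((contDiff_inner_sub_left p v).mul (contDiff_const.sub (contDiff_inner_sub_left p v))))

variable [FiniteDimensional ℝ E]

lemma laplacian_halfBallBarrier (hv : ‖v‖ = 1) (x : E) :
    Δ (halfBallBarrier p v ρ S N) x = -N := by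
  let b := stdOrthonormalBasis ℝ E
  let A := S / ρ ^ 2
  let C := finrank ℝ E * S / ρ ^ 2 + N / 2
  have hline (i) (s : ℝ) : halfBallBarrier p v ρ S N (x + s • b i) =
      halfBallBarrier p v ρ S N x +
        (2 * A * ⟪x - p, b i⟫ + C * ⟪b i, v⟫ * (ρ - 2 * ⟪x - p, v⟫)) * s +
        (A - C * ⟪b i, v⟫ ^ 2) * s ^ 2 := by
    simp only [halfBallBarrier, add_sub_right_comm, norm_add_sq_real, inner_add_left,
      real_inner_smul_left, real_inner_smul_right, norm_smul, b.norm_eq_one, Real.norm_eq_abs,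
      mul_one, sq_abs, A, C]
    ring
  rw [laplacian_eq_of_quadratic b contDiff_halfBallBarrier.contDiffAt hline,
    Finset.sum_sub_distrib, ← Finset.mul_sum, b.sum_sq_inner_right, hv]
  simp only [Finset.sum_const, Finset.card_univ, Fintype.card_fin, nsmul_eq_mul, A, C]
  ring

theorem le_halfBallBarrier {h : E → ℝ} (hρ : 0 < ρ) (hS : 0 ≤ S) (hN : 0 ≤ N) (hv : ‖v‖ = 1)
    (hcont : ContinuousOn h (ballCap p v ρ 0))
    (hC2 : ∀ x ∈ interior (ballCap p v ρ 0), ContDiffAt ℝ 2 h x)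
    (hΔ : ∀ x ∈ interior (ballCap p v ρ 0), -N ≤ Δ h x)
    (hflat : ∀ x ∈ ballCap p v ρ 0, ⟪x - p, v⟫ = 0 → h x ≤ 0)
    (hsphere : ∀ x ∈ ballCap p v ρ 0, ‖x - p‖ = ρ → h x ≤ S)
    {x : E} (hx : x ∈ ballCap p v ρ 0) : h x ≤ halfBallBarrier p v ρ S N x := by
  have : Nontrivial E := nontrivial_of_ne v 0 (norm_ne_zero_iff.1 (by simp [hv]))
  have hbarrier (y : E) : ContDiffAt ℝ 2 (halfBallBarrier p v ρ S N) y :=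
    contDiff_halfBallBarrier.contDiffAt
  refine sub_nonpos.1 (le_of_laplacian_nonneg (g := h - halfBallBarrier p v ρ S N)
    isCompact_ballCap
    (hcont.sub (contDiff_halfBallBarrier (k := 0)).continuous.continuousOn)
    (fun y hy ↦ (hC2 y hy).sub (hbarrier y)) (fun y hy ↦ ?_) (fun y hy ↦ ?_) hx)
  · rw [(hC2 y hy).laplacian_sub (hbarrier y), laplacian_halfBallBarrier hv]
    linarith [hΔ y hy]
  · have hycap := isCompact_ballCap.isClosed.frontier_subset hy
    simp only [Pi.sub_apply, sub_nonpos, halfBallBarrier]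
    rcases norm_eq_or_inner_eq_of_mem_frontier_ballCap hρ.ne' hy with hnorm | hinner
    · have hle : ⟪y - p, v⟫ ≤ ρ := by
        simpa [hv, hnorm] using real_inner_le_norm (y - p) v
      have hpos : 0 ≤ (finrank ℝ E * S / ρ ^ 2 + N / 2) * (⟪y - p, v⟫ * (ρ - ⟪y - p, v⟫)) :=
        mul_nonneg (by positivity) (mul_nonneg (mem_ballCap.1 hycap).2 (sub_nonneg.2 hle))
      rw [hnorm, div_mul_cancel₀ S (by positivity)]
      linarith [hsphere y hycap hnorm]
    · rw [hinner, zero_mul, mul_zero, add_zero]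
      exact (hflat y hycap hinner).trans (by positivity)

/- The barrier is compared with `w - w ∘ R`, where `R` is the reflection in the hyperplane through
`p` orthogonal to `v`: this difference vanishes on the hyperplane. -/
lemma sub_le_of_abs_laplacian_le {w : E → ℝ} (hρ : 0 < ρ) (hS : 0 ≤ S) (hv : ‖v‖ = 1)
    (hcont : ContinuousOn w (closedBall p ρ)) (hC2 : ∀ x ∈ ball p ρ, ContDiffAt ℝ 2 w x)
    (hsphere : ∀ x ∈ sphere p ρ, |w x| ≤ S) (hΔ : ∀ x ∈ ball p ρ, |Δ w x| ≤ N)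
    {s : ℝ} (hs₀ : 0 ≤ s) (hs : s ≤ ρ) :
    w (p + s • v) - w (p - s • v) ≤ halfBallBarrier p v ρ (2 * S) (2 * N) (p + s • v) := by
  have hN : 0 ≤ N := (abs_nonneg _).trans (hΔ p (mem_ball_self hρ))
  let R : E ≃ᵃⁱ[ℝ] E := EuclideanGeometry.reflection (.mk' p (ℝ ∙ v)ᗮ)
  have hRnorm (x : E) : ‖R x - p‖ = ‖x - p‖ := by
    simpa only [dist_eq_norm'] using
      EuclideanGeometry.dist_reflection_eq_of_mem _ (AffineSubspace.self_mem_mk' p (ℝ ∙ v)ᗮ) x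
  have hRball {x : E} (hx : x ∈ ball p ρ) : R x ∈ ball p ρ := by
    rwa [mem_ball_iff_norm, hRnorm, ← mem_ball_iff_norm]
  have hRflat {x : E} (hx : ⟪x - p, v⟫ = 0) : R x = x := reflection_orthogonal_eq_self hx
  have hRline : R (p + s • v) = p - s • v := reflection_orthogonal_add_smul s
  have hwR {x : E} (hx : x ∈ ball p ρ) : ContDiffAt ℝ 2 (w ∘ R) x :=
    (hC2 _ (hRball hx)).comp x R.toContinuousAffineEquiv.toContinuousAffineMap.contDiff.contDiffAt
  have hball := interior_ballCap_subset (p := p) (v := v) (t := 0) hρ.ne'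
  have key := le_halfBallBarrier (h := w - w ∘ R) (x := p + s • v) hρ
    (mul_nonneg zero_le_two hS) (mul_nonneg zero_le_two hN) hv ?_
    (fun x hx ↦ (hC2 x (hball hx)).sub (hwR (hball hx))) (fun x hx ↦ ?_) (fun x _ hx ↦ ?_)
    (fun x _ hx ↦ ?_) ?_
  · simpa only [Pi.sub_apply, Function.comp_apply, hRline] using key
  · refine (hcont.mono inter_subset_left).sub (hcont.comp R.continuous.continuousOn fun x hx ↦ ?_)
    rw [mem_closedBall_iff_norm, hRnorm]
    exact (mem_ballCap.1 hx).1
  · have hx := hball hx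
    have hΔR : Δ (w ∘ R) x = Δ w (R x) := laplacian_comp_affineIsometryEquiv R (hC2 _ (hRball hx))
    rw [(hC2 x hx).laplacian_sub (hwR hx), hΔR]
    linarith [neg_le_of_abs_le (hΔ x hx), le_of_abs_le (hΔ _ (hRball hx))]
  · simp [hRflat hx]
  · have h₁ := hsphere x (by simpa using hx)
    have h₂ := hsphere (R x) (by simpa [hRnorm] using hx)
    simp only [Pi.sub_apply, Function.comp_apply]
    linarith [le_of_abs_le h₁, neg_le_of_abs_le h₂]
  · simp [mem_ballCap, norm_smul, hv, real_inner_smul_left, abs_of_nonneg hs₀, hs, hs₀]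

lemma halfBallBarrier_add_smul_le [Nontrivial E] (hρ : 0 < ρ) (hS : 0 ≤ S) (hN : 0 ≤ N)
    (hv : ‖v‖ = 1) (s : ℝ) :
    halfBallBarrier p v ρ S N (p + s • v) ≤ (finrank ℝ E * S / ρ + N / 2 * ρ) * s := by
  have hdim : (1 : ℝ) ≤ finrank ℝ E := by exact_mod_cast finrank_pos (R := ℝ) (M := E)
  have hcoeff : S / ρ ^ 2 ≤ finrank ℝ E * S / ρ ^ 2 + N / 2 := by
    rw [mul_div_assoc]
    nlinarith [div_nonneg hS (sq_nonneg ρ)]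
  have heval : halfBallBarrier p v ρ S N (p + s • v) =
      S / ρ ^ 2 * s ^ 2 + (finrank ℝ E * S / ρ ^ 2 + N / 2) * (s * (ρ - s)) := by
    simp [halfBallBarrier, norm_smul, real_inner_smul_left, hv]
  calc halfBallBarrier p v ρ S N (p + s • v)
      ≤ (finrank ℝ E * S / ρ ^ 2 + N / 2) * s ^ 2
        + (finrank ℝ E * S / ρ ^ 2 + N / 2) * (s * (ρ - s)) := by rw [heval]; gcongr
    _ = (finrank ℝ E * S / ρ + N / 2 * ρ) * s := by field_simp; ring

lemma fderiv_apply_le_of_abs_laplacian_le {w : E → ℝ} (hρ : 0 < ρ) (hS : 0 ≤ S) (hv : ‖v‖ = 1)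
    (hcont : ContinuousOn w (closedBall p ρ))
    (hC2 : ∀ x ∈ ball p ρ, ContDiffAt ℝ 2 w x) (hsphere : ∀ x ∈ sphere p ρ, |w x| ≤ S)
    (hΔ : ∀ x ∈ ball p ρ, |Δ w x| ≤ N) :
    fderiv ℝ w p v ≤ finrank ℝ E * S / ρ + N / 2 * ρ := by
  have : Nontrivial E := nontrivial_of_ne v 0 (norm_ne_zero_iff.1 (by simp [hv]))
  have hN : 0 ≤ N := (abs_nonneg _).trans (hΔ p (mem_ball_self hρ))
  have hdiff : HasFDerivAt w (fderiv ℝ w p) p :=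
    ((hC2 p (mem_ball_self hρ)).differentiableAt (by simp)).hasFDerivAt
  have hline (a : ℝ) : HasDerivAt (fun s : ℝ ↦ p + (a * s) • v) (a • v) 0 := by
    simpa using (((hasDerivAt_id (0 : ℝ)).const_mul a).smul_const v).const_add p
  have hdirection (a : ℝ) : HasDerivAt (fun s : ℝ ↦ w (p + (a * s) • v)) (a * fderiv ℝ w p v) 0 :=
    (HasFDerivAt.comp_hasDerivAt (0 : ℝ) (by simpa using hdiff) (hline a)).congr_deriv (by simp)
  have hslope := ((hdirection 1).sub (hdirection (-1))).tendsto_slope_zero_right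
  have hbound : (1 * fderiv ℝ w p v - -1 * fderiv ℝ w p v) ≤
      finrank ℝ E * (2 * S) / ρ + 2 * N / 2 * ρ := by
    refine le_of_tendsto hslope ?_
    filter_upwards [Ioo_mem_nhdsGT hρ] with s hs
    have hle := (sub_le_of_abs_laplacian_le hρ hS hv hcont hC2 hsphere hΔ hs.1.le hs.2.le).trans
      (halfBallBarrier_add_smul_le hρ (by positivity) (by positivity) hv s)
    rw [smul_eq_mul, inv_mul_le_iff₀ hs.1, mul_comm s]
    simpa [sub_eq_add_neg] using hle
  have hdouble : finrank ℝ E * (2 * S) / ρ + 2 * N / 2 * ρ =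
      2 * (finrank ℝ E * S / ρ + N / 2 * ρ) := by ring
  linarith

theorem norm_fderiv_le_of_abs_laplacian_le {w : E → ℝ} (hρ : 0 < ρ) (hS : 0 ≤ S)
    (hcont : ContinuousOn w (closedBall p ρ)) (hC2 : ∀ x ∈ ball p ρ, ContDiffAt ℝ 2 w x)
    (hsphere : ∀ x ∈ sphere p ρ, |w x| ≤ S) (hΔ : ∀ x ∈ ball p ρ, |Δ w x| ≤ N) :
    ‖fderiv ℝ w p‖ ≤ finrank ℝ E * S / ρ + N / 2 * ρ := by
  have hN : 0 ≤ N := (abs_nonneg _).trans (hΔ p (mem_ball_self hρ))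
  have hle {v : E} (hv : ‖v‖ = 1) : fderiv ℝ w p v ≤ finrank ℝ E * S / ρ + N / 2 * ρ :=
    fderiv_apply_le_of_abs_laplacian_le hρ hS hv hcont hC2 hsphere hΔ
  refine ContinuousLinearMap.opNorm_le_of_unit_norm (by positivity) fun v hv ↦ ?_
  refine abs_le'.2 ⟨hle hv, ?_⟩
  rw [← map_neg]
  exact hle (by rwa [norm_neg])

theorem norm_fderiv_sub_innerSL_le_of_abs_laplacian_le {u : E → ℝ} {a q : E} (hρ : 0 < ρ)
    (hS : 0 ≤ S) (hC2 : ∀ x ∈ closedBall p ρ, ContDiffAt ℝ 2 u x)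
    (hΔ : ∀ x ∈ ball p ρ, |Δ u x| ≤ N)
    (haffine : ∀ x ∈ sphere p ρ, |u x - ⟪x - q, a⟫| ≤ S) :
    ‖fderiv ℝ u p - innerSL ℝ a‖ ≤ finrank ℝ E * S / ρ + N / 2 * ρ := by
  have hinner (x : E) : ContDiffAt ℝ 2 (fun y ↦ ⟪y - q, a⟫) x :=
    (contDiff_inner_sub_left q a).contDiffAt
  have hC2' {x : E} (hx : x ∈ closedBall p ρ) : ContDiffAt ℝ 2 (u - fun y ↦ ⟪y - q, a⟫) x :=
    (hC2 x hx).sub (hinner x)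
  have hfderiv : HasFDerivAt (u - fun y ↦ ⟪y - q, a⟫) (fderiv ℝ u p - innerSL ℝ a) p := by
    refine ((hC2 p (mem_closedBall_self hρ.le)).differentiableAt (by simp)).hasFDerivAt.sub ?_
    simpa [Function.comp_def, real_inner_comm] using
      (innerSL ℝ a).hasFDerivAt.comp p ((hasFDerivAt_id p).sub_const q)
  rw [← hfderiv.fderiv]
  refine norm_fderiv_le_of_abs_laplacian_le hρ hS
    (fun x hx ↦ (hC2' hx).continuousAt.continuousWithinAt)
    (fun x hx ↦ hC2' (ball_subset_closedBall hx)) haffine fun x hx ↦ ?_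
  rw [(hC2 x (ball_subset_closedBall hx)).laplacian_sub (hinner x), laplacian_inner_sub_left,
    sub_zero]
  exact hΔ x hx

end InteriorGradientEstimate

section HalfPlane

variable {E : Type*} [NormedAddCommGroup E] [InnerProductSpace ℝ E] {u : E → ℝ} {x₀ ν x : E}
  {Q₀ ε R : ℝ}

/-- `u` is `ε`-close to the half-plane solution `Q₀ ((x - x₀) · ν)₊` in the ball of radius `R` about
`x₀`: the flatness hypothesis, with `ε = δ r` and `R = r / κ`. -/
def IsNearHalfPlane (u : E → ℝ) (Q₀ ε R : ℝ) (x₀ ν : E) : Prop :=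
  ∀ x ∈ ball x₀ R, |u x - Q₀ * max ⟪x - x₀, ν⟫ 0| ≤ ε

namespace IsNearHalfPlane

lemma abs_sub_inner_le (hu : IsNearHalfPlane u Q₀ ε R x₀ ν) (hx : x ∈ ball x₀ R)
    (hnonneg : 0 ≤ ⟪x - x₀, ν⟫) : |u x - ⟪x - x₀, Q₀ • ν⟫| ≤ ε := by
  simpa only [max_eq_left hnonneg, real_inner_smul_right] using hu x hx

lemma pos (hu : IsNearHalfPlane u Q₀ ε R x₀ ν) (hQ₀ : 0 ≤ Q₀) (hx : x ∈ ball x₀ R)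
    (hlt : ε < Q₀ * ⟪x - x₀, ν⟫) : 0 < u x := by
  have hmax : Q₀ * ⟪x - x₀, ν⟫ ≤ Q₀ * max ⟪x - x₀, ν⟫ 0 := by gcongr; exact le_max_left _ _
  linarith [neg_le_of_abs_le (hu x hx)]

lemma sub_le_mul_inner (hu : IsNearHalfPlane u Q₀ ε R x₀ ν) (hx : x ∈ ball x₀ R) (hlt : ε < u x) :
    u x - ε ≤ Q₀ * ⟪x - x₀, ν⟫ := by
  have hle := le_of_abs_le (hu x hx)
  rcases le_total ⟪x - x₀, ν⟫ 0 with hneg | hnonneg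
  · rw [max_eq_right hneg, mul_zero] at hle
    linarith
  · rw [max_eq_left hnonneg] at hle
    linarith

/- Points of `ballCap x₀ ν ρ (2 * s)` keep distance `s` from `{u = 0}`, so the interior estimate on
balls of radius `s` applies to `u` minus the half-plane solution, which is affine there. -/
theorem norm_fderiv_sub_innerSL_le [FiniteDimensional ℝ E] (hu : IsNearHalfPlane u Q₀ ε R x₀ ν)
    (hν : ‖ν‖ = 1) (hQ₀ : 0 ≤ Q₀) {M ρ s : ℝ} (hs : 0 < s) (hε : ε < Q₀ * s) (hR : ρ + s < R)
    (hC2 : ∀ x ∈ ball x₀ R, 0 < u x → ContDiffAt ℝ 2 u x)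
    (hΔ : ∀ x ∈ ball x₀ R, 0 < u x → |Δ u x| ≤ M) (hx : x ∈ ballCap x₀ ν ρ (2 * s)) :
    ‖fderiv ℝ u x - innerSL ℝ (Q₀ • ν)‖ ≤ finrank ℝ E * ε / s + M / 2 * s := by
  have hcap {y : E} (hy : y ∈ closedBall x s) : y ∈ ball x₀ R ∧ s ≤ ⟪y - x₀, ν⟫ := by
    obtain ⟨hnorm, hinner⟩ := mem_ballCap.1 (closedBall_subset_ballCap hν hx hy)
    exact ⟨mem_ball_iff_norm.2 (hnorm.trans_lt hR), by linarith⟩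
  have hpos {y : E} (hy : y ∈ closedBall x s) : 0 < u y :=
    hu.pos hQ₀ (hcap hy).1 (hε.trans_le (by gcongr; exact (hcap hy).2))
  have hε₀ : 0 ≤ ε := (abs_nonneg _).trans (hu x (hcap (mem_closedBall_self hs.le)).1)
  refine norm_fderiv_sub_innerSL_le_of_abs_laplacian_le hs hε₀
    (fun y hy ↦ hC2 y (hcap hy).1 (hpos hy)) (fun y hy ↦ ?_)
    (fun y hy ↦ ?_) (q := x₀)
  · have hy := ball_subset_closedBall hy
    exact hΔ y (hcap hy).1 (hpos hy)
  · have hy := hcap (sphere_subset_closedBall hy)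
    exact hu.abs_sub_inner_le hy.1 (hs.le.trans hy.2)

lemma norm_fderiv_sub_innerSL_le_mul [FiniteDimensional ℝ E] {M δ κ r : ℝ}
    (hu : IsNearHalfPlane u Q₀ (δ * r) (r / κ) x₀ ν) (hν : ‖ν‖ = 1) (hQ₀ : 0 < Q₀) (hM : 0 ≤ M)
    (hδ : δ < 1 / 4) (hκ : 0 < κ) (hκQ₀ : κ ≤ Q₀) (hr : 0 < r) (hrκ : r ≤ κ)
    (hC2 : ∀ x ∈ ball x₀ (r / κ), 0 < u x → ContDiffAt ℝ 2 u x)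
    (hΔ : ∀ x ∈ ball x₀ (r / κ), 0 < u x → |Δ u x| ≤ M)
    (hx : x ∈ ballCap x₀ ν (r / (2 * κ)) (r / (2 * Q₀))) :
    ‖fderiv ℝ u x - innerSL ℝ (Q₀ • ν)‖
      ≤ (4 * finrank ℝ E + M / (8 * Q₀ ^ 2)) * Q₀ * (δ + κ) := by
  have hδ₀ : 0 ≤ δ := nonneg_of_mul_nonneg_left
    ((abs_nonneg _).trans (hu x₀ (mem_ball_self (by positivity)))) hr
  have hε : δ * r < Q₀ * (r / (4 * Q₀)) := by
    calc δ * r < 1 / 4 * r := by gcongr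
      _ = Q₀ * (r / (4 * Q₀)) := by field_simp
  have hR : r / (2 * κ) + r / (4 * Q₀) < r / κ := by
    calc r / (2 * κ) + r / (4 * Q₀) ≤ r / (2 * κ) + r / (4 * κ) := by gcongr
      _ = 3 / 4 * (r / κ) := by field_simp; norm_num
      _ < r / κ := by linarith [div_pos hr hκ]
  have ht : r / (2 * Q₀) = 2 * (r / (4 * Q₀)) := by field_simp; norm_num
  calc ‖fderiv ℝ u x - innerSL ℝ (Q₀ • ν)‖
      ≤ finrank ℝ E * (δ * r) / (r / (4 * Q₀)) + M / 2 * (r / (4 * Q₀)) :=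
        hu.norm_fderiv_sub_innerSL_le hν hQ₀.le (by positivity) hε hR hC2 hΔ (ht ▸ hx)
    _ = 4 * finrank ℝ E * Q₀ * δ + M / (8 * Q₀ ^ 2) * Q₀ * r := by field_simp; ring
    _ ≤ 4 * finrank ℝ E * Q₀ * (δ + κ) + M / (8 * Q₀ ^ 2) * Q₀ * (δ + κ) := by
        gcongr <;> linarith
    _ = (4 * finrank ℝ E + M / (8 * Q₀ ^ 2)) * Q₀ * (δ + κ) := by ring

lemma mem_ballCap_of_eq (hu : IsNearHalfPlane u Q₀ ε R x₀ ν) (hQ₀ : 0 < Q₀) {c ρ t : ℝ}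
    (hε : ε < c) (ht : Q₀ * t ≤ c - ε) (hρ : ρ ≤ R) (hx : x ∈ ball x₀ ρ) (hux : u x = c) :
    x ∈ ballCap x₀ ν ρ t := by
  refine mem_ballCap.2 ⟨(mem_ball_iff_norm.1 hx).le, le_of_mul_le_mul_left ?_ hQ₀⟩
  have hle := hu.sub_le_mul_inner (ball_subset_ball hρ hx) (hε.trans_eq hux.symm)
  linarith

end IsNearHalfPlane

end HalfPlane

section Slope

variable {E : Type*} [NormedAddCommGroup E] [InnerProductSpace ℝ E]

lemma norm_gradient_sub [CompleteSpace E] (u : E → ℝ) (x a : E) :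
    ‖gradient u x - a‖ = ‖fderiv ℝ u x - innerSL ℝ a‖ := by
  rw [← (toDual ℝ E).norm_map, map_sub, toDual_gradient]
  rfl

lemma abs_inner_sub_le_of_norm_fderiv_sub_innerSL_le {u : E → ℝ} {a x y : E} {C : ℝ} {T : Set E}
    (hT : Convex ℝ T) (hu : ∀ z ∈ T, DifferentiableAt ℝ u z)
    (hC : ∀ z ∈ T, ‖fderiv ℝ u z - innerSL ℝ a‖ ≤ C) (hx : x ∈ T) (hy : y ∈ T)
    (hxy : u x = u y) : |⟪x - y, a⟫| ≤ C * ‖x - y‖ := by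
  have hmean := hT.norm_image_sub_le_of_norm_fderiv_le' hu hC hy hx
  simpa [hxy, real_inner_comm] using hmean

end Slope

section HausdorffMeasure

lemma hausdorffMeasure_le_of_antilipschitzWith_domRestrict {X Y : Type*} [EMetricSpace X]
    [MeasurableSpace X] [BorelSpace X] [EMetricSpace Y] [MeasurableSpace Y] [BorelSpace Y]
    {f : X → Y} {A : Set X} {K : ℝ≥0} {d : ℝ} (hd : 0 ≤ d)
    (hf : AntilipschitzWith K (A.domRestrict f)) :
    μH[d] A ≤ (K : ℝ≥0∞) ^ d * μH[d] (f '' A) := by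
  have hcoe : Isometry ((↑) : A → X) := isometry_subtype_coe
  calc μH[d] A = μH[d] (univ : Set A) := by
        rw [← hcoe.hausdorffMeasure_image (.inl hd), image_univ, Subtype.range_coe]
    _ ≤ (K : ℝ≥0∞) ^ d * μH[d] (A.domRestrict f '' univ) := hf.le_hausdorffMeasure_image hd _
    _ = (K : ℝ≥0∞) ^ d * μH[d] (f '' A) := by rw [image_univ, range_domRestrict]

variable {E : Type*} [NormedAddCommGroup E] [InnerProductSpace ℝ E]

lemma norm_le_two_mul_norm_orthogonalProjectionOnto {x ν : E} (hν : ‖ν‖ = 1)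
    (hx : |⟪x, ν⟫| ≤ 1 / 2 * ‖x‖) : ‖x‖ ≤ 2 * ‖(ℝ ∙ ν)ᗮ.orthogonalProjectionOnto x‖ := by
  have hpyth := (ℝ ∙ ν).norm_sq_eq_add_norm_sq_projection x
  have hcomponent : ‖(ℝ ∙ ν).orthogonalProjectionOnto x‖ = |⟪x, ν⟫| := by
    rw [Submodule.coe_norm, ← Submodule.starProjection_apply,
      Submodule.starProjection_unit_singleton ℝ hν, norm_smul, hν, mul_one, real_inner_comm,
      Real.norm_eq_abs]
  have hsq := pow_le_pow_left₀ (abs_nonneg _) hx 2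
  rw [← hcomponent] at hsq
  refine le_of_sq_le_sq ?_ (by positivity)
  nlinarith [sq_nonneg ‖x‖]

theorem hausdorffMeasure_le_of_abs_inner_sub_le [MeasurableSpace E] [BorelSpace E] {m : ℕ}
    [Fact (finrank ℝ E = m + 1)] {A : Set E} {x₀ ν : E} {ρ : ℝ} (hρ : 0 < ρ) (hν : ‖ν‖ = 1)
    (hA : A ⊆ ball x₀ ρ) (hslope : ∀ x ∈ A, ∀ y ∈ A, |⟪x - y, ν⟫| ≤ 1 / 2 * ‖x - y‖) :
    μH[m] A ≤ ENNReal.ofReal ((2 * ρ) ^ m) * μH[m] (ball (0 : EuclideanSpace ℝ (Fin m)) 1) := by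
  let b := OrthonormalBasis.fromOrthogonalSpanSingleton (𝕜 := ℝ) m (v := ν)
    (norm_ne_zero_iff.1 (by simp [hν]))
  let P (x : E) : EuclideanSpace ℝ (Fin m) := b.repr ((ℝ ∙ ν)ᗮ.orthogonalProjectionOnto x)
  have hP (x y : E) : dist (P x) (P y) = ‖(ℝ ∙ ν)ᗮ.orthogonalProjectionOnto (x - y)‖ := by
    rw [b.repr.dist_map, dist_eq_norm, map_sub]
  have hanti : AntilipschitzWith 2 (A.domRestrict P) := by
    refine AntilipschitzWith.of_le_mul_dist fun x y ↦ ?_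
    rw [domRestrict_apply, domRestrict_apply, hP, Subtype.dist_eq, dist_eq_norm]
    exact norm_le_two_mul_norm_orthogonalProjectionOnto hν (hslope x x.2 y y.2)
  have himage : P '' A ⊆ ball (P x₀) ρ := by
    rintro _ ⟨x, hx, rfl⟩
    rw [mem_ball, hP]
    exact (Submodule.norm_orthogonalProjectionOnto_apply_le _ _).trans_lt
      (mem_ball_iff_norm.1 (hA hx))
  calc μH[m] A ≤ (2 : ℝ≥0) ^ (m : ℝ) * μH[m] (P '' A) :=
        hausdorffMeasure_le_of_antilipschitzWith_domRestrict m.cast_nonneg hanti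
    _ ≤ (2 : ℝ≥0) ^ (m : ℝ) * μH[m] (ball (P x₀) ρ) := by gcongr
    _ = ENNReal.ofReal ((2 * ρ) ^ m) * μH[m] (ball (0 : EuclideanSpace ℝ (Fin m)) 1) := by
        rw [Measure.addHaar_ball_of_pos _ _ hρ, finrank_euclideanSpace_fin, mul_pow,
          ENNReal.ofReal_mul (by positivity), ENNReal.ofReal_pow zero_le_two, mul_assoc]
        simp

end HausdorffMeasure

namespace IsNearHalfPlane

/- On the convex cap containing the level set the gradient is within `Q₀ / 2` of `Q₀ ν`, so the
level set is a Lipschitz graph over the hyperplane orthogonal to `ν`. -/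
theorem hausdorffMeasure_levelSet_le {E : Type*} [NormedAddCommGroup E] [InnerProductSpace ℝ E]
    [MeasurableSpace E] [BorelSpace E] {m : ℕ} [Fact (finrank ℝ E = m + 1)] {u : E → ℝ} {x₀ ν : E}
    {Q₀ ε R c ρ t : ℝ} (hu : IsNearHalfPlane u Q₀ ε R x₀ ν) (hν : ‖ν‖ = 1) (hQ₀ : 0 < Q₀)
    (hρ : 0 < ρ) (hρR : ρ ≤ R) (hε : ε < c) (ht : Q₀ * t ≤ c - ε)
    (hfderiv : ∀ x ∈ ballCap x₀ ν ρ t, ‖fderiv ℝ u x - innerSL ℝ (Q₀ • ν)‖ ≤ Q₀ / 2) :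
    μH[m] {x | x ∈ ball x₀ ρ ∧ u x = c} ≤
      ENNReal.ofReal ((2 * ρ) ^ m) * μH[m] (ball (0 : EuclideanSpace ℝ (Fin m)) 1) := by
  have hdiff : ∀ x ∈ ballCap x₀ ν ρ t, DifferentiableAt ℝ u x := by
    intro x hx
    by_contra hnot
    have hle := hfderiv x hx
    rw [fderiv_zero_of_not_differentiableAt hnot, zero_sub, norm_neg, innerSL_apply_norm, norm_smul,
      hν, mul_one, Real.norm_of_nonneg hQ₀.le] at hle
    linarith
  refine hausdorffMeasure_le_of_abs_inner_sub_le hρ hν (fun x hx ↦ hx.1) fun x hx y hy ↦ ?_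
  have hslope := abs_inner_sub_le_of_norm_fderiv_sub_innerSL_le convex_ballCap hdiff hfderiv
    (hu.mem_ballCap_of_eq hQ₀ hε ht hρR hx.1 hx.2) (hu.mem_ballCap_of_eq hQ₀ hε ht hρR hy.1 hy.2)
    (hx.2.trans hy.2.symm)
  rw [real_inner_smul_right, abs_mul, abs_of_pos hQ₀] at hslope
  refine le_of_mul_le_mul_left (hslope.trans_eq ?_) hQ₀
  ring

theorem norm_gradient_sub_le_and_hausdorffMeasure_levelSet_le {E : Type*} [NormedAddCommGroup E]
    [InnerProductSpace ℝ E] [FiniteDimensional ℝ E] [MeasurableSpace E] [BorelSpace E] {m : ℕ}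
    [hm : Fact (finrank ℝ E = m + 1)] {u : E → ℝ} {x₀ ν : E} {Q₀ M C δ κ r : ℝ}
    (hu : IsNearHalfPlane u Q₀ (δ * r) (r / κ) x₀ ν) (hν : ‖ν‖ = 1) (hQ₀ : 0 < Q₀) (hM : 0 ≤ M)
    (hC : C = 4 * (m + 1 : ℕ) + M / (8 * Q₀ ^ 2)) (hδ : δ ≤ 1 / (4 * C)) (hκ : 0 < κ)
    (hκC : κ ≤ 1 / (4 * C)) (hκQ₀ : κ ≤ Q₀) (hr : 0 < r) (hrκ : r ≤ κ)
    (hC2 : ∀ x ∈ ball x₀ (r / κ), 0 < u x → ContDiffAt ℝ 2 u x)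
    (hΔ : ∀ x ∈ ball x₀ (r / κ), 0 < u x → |Δ u x| ≤ M) :
    (∀ x ∈ ball x₀ (r / (2 * κ)), u x = r → ‖gradient u x - Q₀ • ν‖ ≤ C * Q₀ * (δ + κ)) ∧
      μH[m] {x | x ∈ ball x₀ (r / (2 * κ)) ∧ u x = r} ≤
        ENNReal.ofReal ((r / κ) ^ m) * μH[m] (ball (0 : EuclideanSpace ℝ (Fin m)) 1) := by
  have hC₁ : 1 < C := by
    have : 0 ≤ M / (8 * Q₀ ^ 2) := by positivity
    rw [hC]
    push_cast
    linarith [m.cast_nonneg (α := ℝ)]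
  have hδ₄ : δ < 1 / 4 := hδ.trans_lt (one_div_lt_one_div_of_lt (by norm_num) (by linarith))
  have hsmall : C * Q₀ * (δ + κ) ≤ Q₀ / 2 := by
    calc C * Q₀ * (δ + κ) ≤ C * Q₀ * (1 / (4 * C) + 1 / (4 * C)) := by gcongr
      _ = Q₀ / 2 := by field_simp; norm_num
  have hfderiv (x) (hx : x ∈ ballCap x₀ ν (r / (2 * κ)) (r / (2 * Q₀))) :
      ‖fderiv ℝ u x - innerSL ℝ (Q₀ • ν)‖ ≤ C * Q₀ * (δ + κ) := by
    simpa only [hC, hm.out] using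
      hu.norm_fderiv_sub_innerSL_le_mul hν hQ₀ hM hδ₄ hκ hκQ₀ hr hrκ hC2 hΔ hx
  have hε : δ * r < r := by nlinarith
  have ht : Q₀ * (r / (2 * Q₀)) ≤ r - δ * r := by
    calc Q₀ * (r / (2 * Q₀)) = r / 2 := by field_simp
      _ ≤ r - δ * r := by nlinarith
  have hρ : r / (2 * κ) ≤ r / κ := by gcongr; linarith
  refine ⟨fun x hx hux ↦ ?_, ?_⟩
  · rw [norm_gradient_sub]
    exact hfderiv x (hu.mem_ballCap_of_eq hQ₀ hε ht hρ hx hux)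
  · have hdiameter : r / κ = 2 * (r / (2 * κ)) := by field_simp
    rw [hdiameter]
    exact hu.hausdorffMeasure_levelSet_le hν hQ₀ (by positivity) hρ hε ht
      fun x hx ↦ (hfderiv x hx).trans hsmall

end IsNearHalfPlane

section LevelSet

lemma radius_le_of_ball_subset_ball {E : Type*} [NormedAddCommGroup E] [NormedSpace ℝ E]
    [Nontrivial E] {x y : E} {r s : ℝ} (hr : 0 ≤ r) (hs : 0 ≤ s) (h : ball x r ⊆ ball y s) :
    r ≤ s := by
  have hdiam := diam_mono h isBounded_ball
  rw [diam_ball_eq x hr, diam_ball_eq y hs] at hdiam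
  linarith

lemma contDiffAt_of_mem_posSet {u : EuclideanSpace ℝ (Fin n) → ℝ} {k : WithTop ℕ∞}
    {x : EuclideanSpace ℝ (Fin n)} (hu : ContinuousOn u (ball 0 1))
    (hC : ContDiffOn ℝ k u (posSet u)) (hx : x ∈ posSet u) : ContDiffAt ℝ k u x := by
  have hopen : IsOpen (posSet u) := hu.isOpen_inter_preimage isOpen_ball isOpen_Ioi
  exact hC.contDiffAt (hopen.mem_nhds hx)

theorem flat_level_set_gradient_estimate_general
    (hn : 1 ≤ n) (M Q₀ : ℝ) (hM : 0 ≤ M) (hQ₀ : 0 < Q₀) :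
    ∃ δ₀ κ₀ C₁ C₂ : ℝ, 0 < δ₀ ∧ 0 < κ₀ ∧ 0 < C₁ ∧ 0 < C₂ ∧
      ∀ u : EuclideanSpace ℝ (Fin n) → ℝ,
        ContinuousOn u (ball 0 1) →
        ContDiffOn ℝ 2 u (posSet u) →
        (∀ x ∈ posSet u, |lap u x| ≤ M) →
        ∀ (δ κ r : ℝ) (x₀ ν : EuclideanSpace ℝ (Fin n)),
          δ ≤ δ₀ → 0 < κ → κ ≤ κ₀ → 0 < r → ‖ν‖ = 1 →
          ball x₀ (r/κ) ⊆ ball (0 : EuclideanSpace ℝ (Fin n)) 1 →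
          IsNearHalfPlane u Q₀ (δ * r) (r/κ) x₀ ν →
          (∀ x ∈ ball x₀ (r/(2*κ)), u x = r →
            ‖gradient u x - Q₀ • ν‖ ≤ C₁ * Q₀ * (δ + κ)) ∧
          μH[(n-1:ℝ)] {x | x ∈ ball x₀ (r/(2*κ)) ∧ u x = r}
            ≤ ENNReal.ofReal (C₂ * (r/κ)^(n-1)) := by
  obtain ⟨m, rfl⟩ := Nat.exists_eq_add_of_le' hn
  have : Fact (finrank ℝ (EuclideanSpace ℝ (Fin (m + 1))) = m + 1) := ⟨finrank_euclideanSpace_fin⟩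
  let ω : ℝ≥0∞ := μH[m] (ball (0 : EuclideanSpace ℝ (Fin m)) 1)
  have hω : 0 < ω := measure_ball_pos _ _ one_pos
  have hω_top : ω ≠ ⊤ := measure_ball_lt_top.ne
  let C : ℝ := 4 * (m + 1 : ℕ) + M / (8 * Q₀ ^ 2)
  have hC : 0 < C := by positivity
  refine ⟨1 / (4 * C), min Q₀ (1 / (4 * C)), C, ω.toReal, by positivity, by positivity, hC,
    ENNReal.toReal_pos hω.ne' hω_top, ?_⟩
  intro u hcont hC2 hlap δ κ r x₀ ν hδ hκ hκ₀ hr hν hball hflat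
  have hrκ : r ≤ κ := (div_le_one hκ).1
    (radius_le_of_ball_subset_ball (by positivity) zero_le_one hball)
  have hC2At (x) (hx : x ∈ ball x₀ (r / κ)) (hux : 0 < u x) : ContDiffAt ℝ 2 u x :=
    contDiffAt_of_mem_posSet hcont hC2 ⟨hball hx, hux⟩
  have hΔ (x) (hx : x ∈ ball x₀ (r / κ)) (hux : 0 < u x) : |Δ u x| ≤ M :=
    lap_eq_laplacian (hC2At x hx hux) ▸ hlap x ⟨hball hx, hux⟩
  obtain ⟨hgradient, hmeasure⟩ :=
    hflat.norm_gradient_sub_le_and_hausdorffMeasure_levelSet_le hν hQ₀ hM rfl hδ hκ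
      (hκ₀.trans (min_le_right _ _)) (hκ₀.trans (min_le_left _ _)) hr hrκ hC2At hΔ
  refine ⟨hgradient, ?_⟩
  rw [mul_comm ω.toReal, ENNReal.ofReal_mul (by positivity), ENNReal.ofReal_toReal hω_top,
    Nat.cast_succ, add_sub_cancel_right, Nat.add_sub_cancel]
  exact hmeasure

end LevelSet

/-- **Lemma 3.3.** If `u` is `δr`-close to the half-plane solution `Q₀((x-x₀)·ν)₊` in
`B_{r/κ}(x₀)`, then on the level set `{u = r} ∩ B_{r/(2κ)}(x₀)` the gradient of `u` is
`C₁Q₀(δ+κ)`-close to `Q₀ν`, and this level set has `(n-1)`-dimensional measure at most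
`C₂(r/κ)^{n-1}`; the constants depend only on `n`, `‖f‖_∞` and `Q₀`. -/
theorem flat_level_set_gradient_estimate
    (hn : 2 ≤ n) (M Q₀ : ℝ) (hM : 0 ≤ M) (hQ₀ : 0 < Q₀) :
    ∃ δ₀ κ₀ C₁ C₂ : ℝ, 0 < δ₀ ∧ 0 < κ₀ ∧ 0 < C₁ ∧ 0 < C₂ ∧
      ∀ (f u : EuclideanSpace ℝ (Fin n) → ℝ),
        ContDiffOn ℝ (⊤ : ℕ∞) f (ball 0 1) →
        (∀ x ∈ ball (0 : EuclideanSpace ℝ (Fin n)) 1, |f x| ≤ M) →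
        ContinuousOn u (ball 0 1) →
        (∀ x ∈ ball (0 : EuclideanSpace ℝ (Fin n)) 1, 0 ≤ u x) →
        ContDiffOn ℝ 2 u (posSet u) →
        (∀ x ∈ posSet u, lap u x = - f x) →
        ∀ (δ κ r : ℝ) (x₀ ν : EuclideanSpace ℝ (Fin n)),
          0 < δ → δ ≤ δ₀ → 0 < κ → κ ≤ κ₀ → 0 < r → ‖ν‖ = 1 →
          ball x₀ (r/κ) ⊆ ball (0 : EuclideanSpace ℝ (Fin n)) 1 →
          (∀ x ∈ ball x₀ (r/κ), |u x - Q₀ * max ⟪x - x₀, ν⟫ 0| ≤ δ * r) →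
          (∀ x ∈ ball x₀ (r/(2*κ)), u x = r →
            ‖gradient u x - Q₀ • ν‖ ≤ C₁ * Q₀ * (δ + κ)) ∧
          μH[(n-1:ℝ)] {x | x ∈ ball x₀ (r/(2*κ)) ∧ u x = r}
            ≤ ENNReal.ofReal (C₂ * (r/κ)^(n-1)) := by
  obtain ⟨δ₀, κ₀, C₁, C₂, hδ₀, hκ₀, hC₁, hC₂, h⟩ :=
    flat_level_set_gradient_estimate_general (one_le_two.trans hn) M Q₀ hM hQ₀
  exact ⟨δ₀, κ₀, C₁, C₂, hδ₀, hκ₀, hC₁, hC₂, fun f u _ hf hcont _ hC2 hlap δ κ r x₀ ν _ ↦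
    h u hcont hC2 (fun x hx ↦ by simpa [hlap x hx] using hf x hx.1) δ κ r x₀ ν⟩
end
end
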